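/- arXiv:2306.09895 — 5 statements merged into one kernel-verified Lean document; each statement's English description precedes it below -/
import Mathlib

section
/- Let p ≥ 1 and let f : [0,∞) → ℝ be locally integrable. Suppose that for every θ ∈ (0,1] the function t ↦ ∫_t^{t+θ} f(s) ds belongs to L^p([0,∞)). Then there exists a constant B > 0, independent of θ, such that ‖ t ↦ ∫_t^{t+θ} f(s) ds ‖_{L^p([0,∞))} ≤ B for all θ ∈ (0,1]. -/
open MeasureTheory Set Filter

/-!
Write `N θ` for the `L^p` norm on `[0,∞)` of the increment `t ↦ H (t + θ) - H t`, where `H` is a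
primitive of `f`. Since translation to the right does not increase norms on `[0,∞)`, the function
`N` satisfies `N (a + b) ≤ K (N a + N b)` and `N a ≤ K (N (a + b) + N b)`, where `K` is the constant
of the quasi-triangle inequality in `L^p`. By Fatou's lemma `N` is lower semicontinuous, so by the
Baire category argument it is bounded near some `x ≥ 0`. Comparing `a + x` with `x` bounds `N` near
`0`, and repeated doubling then bounds it on every interval `[0,R]`.
-/

open ENNReal (LpAddConst LpAddConst_lt_top)
open scoped ENNReal NNReal Topology fwdDiff

section BaireCategory

variable {X : Type*} [TopologicalSpace X]

theorem not_isMeagre_of_nonempty_interior [BaireSpace X] {s : Set X} (hs : (interior s).Nonempty) :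
    ¬ IsMeagre s := fun h ↦
  not_isMeagre_of_isOpen isOpen_interior hs (h.mono interior_subset)

theorem exists_eventually_le_nat_of_not_isMeagre {N : X → ℝ≥0∞} {S T : Set X} (hT : IsClosed T)
    (hN : LowerSemicontinuousOn N T) (hST : S ⊆ T) (hS : ¬ IsMeagre S)
    (hfin : ∀ x ∈ S, N x ≠ ∞) :
    ∃ n : ℕ, ∃ x ∈ S, ∀ᶠ y in 𝓝 x, N y ≤ n := by
  let A (n : ℕ) : Set X := {x ∈ S | N x ≤ n}
  have hSA : S ⊆ ⋃ n, A n := fun x hx ↦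
    have ⟨n, hn⟩ := ENNReal.exists_nat_gt (hfin x hx)
    mem_iUnion.2 ⟨n, hx, hn.le⟩
  obtain ⟨n, hn⟩ : ∃ n, ¬ IsNowhereDense (A n) := by
    by_contra! h
    exact hS ((isMeagre_iUnion fun n ↦ (h n).isMeagre).mono hSA)
  obtain ⟨V, hV, hTV⟩ := lowerSemicontinuousOn_iff_preimage_Iic.1 hN n
  have hclosed : IsClosed (T ∩ N ⁻¹' Iic ↑n) := hTV ▸ hT.inter hV
  have hclosure : closure (A n) ⊆ T ∩ N ⁻¹' Iic ↑n :=
    closure_minimal (fun x hx ↦ ⟨hST hx.1, hx.2⟩) hclosed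
  obtain ⟨z, hz⟩ := nonempty_iff_ne_empty.2 hn
  obtain ⟨x, hx, hxA⟩ := mem_closure_iff.1 (interior_subset hz) _ isOpen_interior hz
  exact ⟨n, x, hxA.1, mem_of_superset (mem_interior_iff_mem_nhds.1 hx) fun y hy ↦ (hclosure hy).2⟩

end BaireCategory

section QuasiSubadditive

variable {N : ℝ → ℝ≥0∞} {K C : ℝ≥0}

theorem eventually_nhdsGE_zero_le_of_eventually_nhds_le
    (hsub : ∀ a ≥ 0, ∀ b ≥ 0, N a ≤ K * (N (a + b) + N b)) {x : ℝ} (hx : 0 ≤ x)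
    (hC : ∀ᶠ y in 𝓝 x, N y ≤ C) :
    ∀ᶠ a in 𝓝[≥] 0, N a ≤ (K * (C + C) : ℝ≥0) := by
  have hshift : Tendsto (· + x) (𝓝[≥] 0) (𝓝 x) :=
    ((continuous_add_const x).tendsto' 0 x (zero_add x)).mono_left nhdsWithin_le_nhds
  filter_upwards [hshift.eventually hC, self_mem_nhdsWithin] with a hax ha
  push_cast
  grw [hsub a ha x hx, hax, hC.self_of_nhds]

theorem exists_forall_mem_Icc_le_of_eventually_nhdsGE
    (hadd : ∀ a ≥ 0, ∀ b ≥ 0, N (a + b) ≤ K * (N a + N b))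
    (hC : ∀ᶠ a in 𝓝[≥] 0, N a ≤ C) (R : ℝ) :
    ∃ B : ℝ≥0, ∀ a ∈ Icc 0 R, N a ≤ B := by
  obtain ⟨r, hr, hrC⟩ := mem_nhdsGE_iff_exists_Icc_subset.1 hC
  have hdouble (n : ℕ) : ∃ B : ℝ≥0, ∀ a ∈ Icc 0 (2 ^ n * r), N a ≤ B := by
    induction n with
    | zero => exact ⟨C, fun a ha ↦ hrC (by simpa using ha)⟩
    | succ n ih =>
      obtain ⟨B, hB⟩ := ih
      refine ⟨K * (B + B), fun a ⟨ha₀, ha⟩ ↦ ?_⟩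
      have hhalf : a / 2 ∈ Icc 0 (2 ^ n * r) := ⟨by positivity, by rw [pow_succ] at ha; linarith⟩
      calc N a = N (a / 2 + a / 2) := by rw [add_halves]
        _ ≤ K * (N (a / 2) + N (a / 2)) := hadd _ hhalf.1 _ hhalf.1
        _ ≤ K * (B + B) := by grw [hB _ hhalf]
        _ = (K * (B + B) : ℝ≥0) := by push_cast; rfl
  obtain ⟨n, hn⟩ := pow_unbounded_of_one_lt (R / r) one_lt_two
  obtain ⟨B, hB⟩ := hdouble n
  exact ⟨B, fun a ha ↦ hB a ⟨ha.1, ha.2.trans ((div_lt_iff₀ hr).1 hn).le⟩⟩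

end QuasiSubadditive

theorem lowerSemicontinuousOn_eLpNorm {X α E : Type*} [TopologicalSpace X]
    [FirstCountableTopology X] [MeasurableSpace α] [NormedAddCommGroup E] {μ : Measure α}
    {p : ℝ≥0∞} {F : X → α → E} {T : Set X}
    (hF : ∀ x ∈ T, AEStronglyMeasurable (F x) μ) (hcont : ∀ᵐ t ∂μ, ContinuousOn (F · t) T) :
    LowerSemicontinuousOn (fun x ↦ eLpNorm (F x) p μ) T := by
  intro x hx c hc
  by_contra hlow
  obtain ⟨u, hu, huT⟩ := exists_seq_forall_of_frequently
    ((not_eventually.1 hlow).and_eventually self_mem_nhdsWithin)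
  have hfatou : eLpNorm (F x) p μ ≤ liminf (fun n ↦ eLpNorm (F (u n)) p μ) atTop :=
    Lp.eLpNorm_lim_le_liminf_eLpNorm (fun n ↦ hF _ (huT n).2) _
      (hcont.mono fun t ht ↦ (ht x hx).tendsto.comp hu)
  have hle : liminf (fun n ↦ eLpNorm (F (u n)) p μ) atTop ≤ c :=
    liminf_le_of_frequently_le' (Frequently.of_forall fun n ↦ not_lt.1 (huT n).1)
  exact hc.not_ge (hfatou.trans hle)

section Increments

variable {E : Type*} [NormedAddCommGroup E] {H : ℝ → E}

theorem eLpNorm_comp_add_right_restrict_Ici_le (u : ℝ → E) (p : ℝ≥0∞) (c : ℝ) {a : ℝ}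
    (ha : 0 ≤ a) :
    eLpNorm (fun t ↦ u (t + a)) p (volume.restrict (Ici c)) ≤
      eLpNorm u p (volume.restrict (Ici c)) := by
  have hmap : (volume.restrict (Ici c)).map (· + a) = volume.restrict (Ici (c + a)) := by
    simpa using ((measurePreserving_add_right volume a).restrict_preimage
      (measurableSet_Ici (a := c + a))).map_eq
  calc eLpNorm (fun t ↦ u (t + a)) p (volume.restrict (Ici c))
      = eLpNorm u p (volume.restrict (Ici (c + a))) := by
        rw [← hmap, (measurableEmbedding_addRight a).eLpNorm_map_measure]; rfl
    _ ≤ eLpNorm u p (volume.restrict (Ici c)) :=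
        eLpNorm_mono_measure _ (Measure.restrict_mono (Ici_subset_Ici.2 (by linarith)) le_rfl)

theorem continuousOn_fwdDiff_Ici {c : ℝ} (hH : ContinuousOn H (Ici c)) {θ : ℝ} (hθ : 0 ≤ θ) :
    ContinuousOn (Δ_[θ] H) (Ici c) :=
  (hH.comp (by fun_prop) fun _ ht ↦ le_add_of_le_of_nonneg ht hθ).sub hH

theorem aestronglyMeasurable_fwdDiff_restrict_Ici {c : ℝ} (hH : ContinuousOn H (Ici c)) {θ : ℝ}
    (hθ : 0 ≤ θ) : AEStronglyMeasurable (Δ_[θ] H) (volume.restrict (Ici c)) :=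
  (continuousOn_fwdDiff_Ici hH hθ).aestronglyMeasurable measurableSet_Ici

theorem lowerSemicontinuousOn_eLpNorm_fwdDiff {c : ℝ} (hH : ContinuousOn H (Ici c)) (p : ℝ≥0∞) :
    LowerSemicontinuousOn (fun θ ↦ eLpNorm (Δ_[θ] H) p (volume.restrict (Ici c))) (Ici 0) := by
  refine lowerSemicontinuousOn_eLpNorm
    (fun θ hθ ↦ aestronglyMeasurable_fwdDiff_restrict_Ici hH hθ) ?_
  filter_upwards [ae_restrict_mem measurableSet_Ici] with t ht
  have hshift : ContinuousOn (fun θ ↦ H (t + θ)) (Ici 0) :=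
    hH.comp (by fun_prop) fun θ hθ ↦ mem_Ici.2 (le_add_of_le_of_nonneg ht hθ)
  exact hshift.sub continuousOn_const

theorem fwdDiff_add_step {M G : Type*} [AddCommMonoid M] [AddCommGroup G] (a b : M) (H : M → G) :
    Δ_[a + b] H = Δ_[a] H + fun t ↦ Δ_[b] H (t + a) := by
  ext t
  simp [fwdDiff, add_assoc]

theorem aestronglyMeasurable_fwdDiff_comp_add_restrict_Ici {c : ℝ} (hH : ContinuousOn H (Ici c))
    {a b : ℝ} (ha : 0 ≤ a) (hb : 0 ≤ b) :
    AEStronglyMeasurable (fun t ↦ Δ_[b] H (t + a)) (volume.restrict (Ici c)) := by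
  have hdiff := (aestronglyMeasurable_fwdDiff_restrict_Ici hH (add_nonneg ha hb)).sub
    (aestronglyMeasurable_fwdDiff_restrict_Ici hH ha)
  rwa [fwdDiff_add_step, add_sub_cancel_left] at hdiff

theorem eLpNorm_fwdDiff_add_le {c : ℝ} (hH : ContinuousOn H (Ici c)) (p : ℝ≥0∞) {a b : ℝ}
    (ha : 0 ≤ a) (hb : 0 ≤ b) :
    eLpNorm (Δ_[a + b] H) p (volume.restrict (Ici c)) ≤
      LpAddConst p * (eLpNorm (Δ_[a] H) p (volume.restrict (Ici c)) +
        eLpNorm (Δ_[b] H) p (volume.restrict (Ici c))) := by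
  rw [fwdDiff_add_step]
  grw [eLpNorm_add_le' (aestronglyMeasurable_fwdDiff_restrict_Ici hH ha)
      (aestronglyMeasurable_fwdDiff_comp_add_restrict_Ici hH ha hb),
    eLpNorm_comp_add_right_restrict_Ici_le _ p c ha]

theorem eLpNorm_fwdDiff_le_add {c : ℝ} (hH : ContinuousOn H (Ici c)) (p : ℝ≥0∞) {a b : ℝ}
    (ha : 0 ≤ a) (hb : 0 ≤ b) :
    eLpNorm (Δ_[a] H) p (volume.restrict (Ici c)) ≤
      LpAddConst p * (eLpNorm (Δ_[a + b] H) p (volume.restrict (Ici c)) +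
        eLpNorm (Δ_[b] H) p (volume.restrict (Ici c))) := by
  rw [← add_sub_cancel_right (Δ_[a] H) fun t ↦ Δ_[b] H (t + a), ← fwdDiff_add_step]
  grw [eLpNorm_sub_le' (aestronglyMeasurable_fwdDiff_restrict_Ici hH (add_nonneg ha hb))
      (aestronglyMeasurable_fwdDiff_comp_add_restrict_Ici hH ha hb),
    eLpNorm_comp_add_right_restrict_Ici_le _ p c ha]

theorem exists_forall_mem_Icc_eLpNorm_fwdDiff_le {c : ℝ} (hH : ContinuousOn H (Ici c)) {p : ℝ≥0∞}
    {S : Set ℝ} (hS₀ : S ⊆ Ici 0) (hS : ¬ IsMeagre S)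
    (hfin : ∀ θ ∈ S, eLpNorm (Δ_[θ] H) p (volume.restrict (Ici c)) ≠ ∞) (R : ℝ) :
    ∃ B : ℝ≥0, ∀ θ ∈ Icc 0 R, eLpNorm (Δ_[θ] H) p (volume.restrict (Ici c)) ≤ B := by
  obtain ⟨K, hK⟩ : ∃ K : ℝ≥0, K = LpAddConst p := ⟨_, ENNReal.coe_toNNReal (LpAddConst_lt_top p).ne⟩
  have hadd (a : ℝ) (ha : a ≥ 0) (b : ℝ) (hb : b ≥ 0) := hK ▸ eLpNorm_fwdDiff_add_le hH p ha hb
  have hsub (a : ℝ) (ha : a ≥ 0) (b : ℝ) (hb : b ≥ 0) := hK ▸ eLpNorm_fwdDiff_le_add hH p ha hb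
  obtain ⟨n, x, hxS, hx⟩ := exists_eventually_le_nat_of_not_isMeagre isClosed_Ici
    (lowerSemicontinuousOn_eLpNorm_fwdDiff hH p) hS₀ hS hfin
  have hzero := eventually_nhdsGE_zero_le_of_eventually_nhds_le (C := n) hsub (hS₀ hxS)
    (by simpa using hx)
  exact exists_forall_mem_Icc_le_of_eventually_nhdsGE hadd hzero R

end Increments

section IntervalAverage

variable {E : Type*} [NormedAddCommGroup E] {f : ℝ → E} {c : ℝ}

theorem intervalIntegrable_of_locallyIntegrableOn_Ici (hf : LocallyIntegrableOn f (Ici c))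
    {a b : ℝ} (ha : c ≤ a) (hb : c ≤ b) : IntervalIntegrable f volume a b :=
  (hf.integrableOn_compact_subset (fun _ hx ↦ (le_inf ha hb).trans hx.1)
    isCompact_uIcc).intervalIntegrable

variable [NormedSpace ℝ E]

theorem continuousOn_primitive_Ici (hf : LocallyIntegrableOn f (Ici c)) :
    ContinuousOn (fun x ↦ ∫ s in c..x, f s) (Ici c) := by
  intro x hx
  have hcont : ContinuousOn (fun x ↦ ∫ s in c..x, f s) (uIcc c (x + 1)) :=
    intervalIntegral.continuousOn_primitive_interval'
      (intervalIntegrable_of_locallyIntegrableOn_Ici hf le_rfl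
        (le_add_of_le_of_nonneg hx zero_le_one)) left_mem_uIcc
  rw [uIcc_of_le (le_add_of_le_of_nonneg hx zero_le_one)] at hcont
  exact (hcont x ⟨hx, by simp⟩).mono_of_mem_nhdsWithin
    (inter_mem_nhdsWithin _ (Iic_mem_nhds (lt_add_one x)))

theorem fwdDiff_primitive_eqOn (hf : LocallyIntegrableOn f (Ici c)) {θ : ℝ} (hθ : 0 ≤ θ) :
    EqOn (Δ_[θ] fun x ↦ ∫ s in c..x, f s) (fun t ↦ ∫ s in t..(t + θ), f s) (Ici c) := fun _ ht ↦
  intervalIntegral.integral_interval_sub_left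
    (intervalIntegrable_of_locallyIntegrableOn_Ici hf le_rfl (le_add_of_le_of_nonneg ht hθ))
    (intervalIntegrable_of_locallyIntegrableOn_Ici hf le_rfl ht)

theorem fwdDiff_primitive_ae_eq (hf : LocallyIntegrableOn f (Ici c)) {θ : ℝ} (hθ : 0 ≤ θ) :
    (Δ_[θ] fun x ↦ ∫ s in c..x, f s) =ᵐ[volume.restrict (Ici c)]
      fun t ↦ ∫ s in t..(t + θ), f s :=
  (fwdDiff_primitive_eqOn hf hθ).aeEq_restrict measurableSet_Ici

theorem aestronglyMeasurable_intervalIntegral_add (hf : LocallyIntegrableOn f (Ici c)) {θ : ℝ}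
    (hθ : 0 ≤ θ) :
    AEStronglyMeasurable (fun t ↦ ∫ s in t..(t + θ), f s) (volume.restrict (Ici c)) :=
  (aestronglyMeasurable_fwdDiff_restrict_Ici (continuousOn_primitive_Ici hf) hθ).congr
    (fwdDiff_primitive_ae_eq hf hθ)

theorem lp_norm_of_interval_average_uniformly_bounded_general [CompleteSpace E]
    {p : ℝ≥0∞} (hp : p ≠ 0) (hf : LocallyIntegrableOn f (Ici c))
    {S : Set ℝ} (hS₀ : S ⊆ Ici 0) (hS : ¬ IsMeagre S)
    (hFp : ∀ θ ∈ S, MemLp (fun t ↦ ∫ s in t..(t + θ), f s) p (volume.restrict (Ici c))) (R : ℝ) :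
    ∃ B : ℝ≥0, ∀ θ ∈ Icc 0 R,
      eLpNorm (fun t ↦ ∫ s in t..(t + θ), f s) p (volume.restrict (Ici c)) ≤ B := by
  obtain ⟨B, hB⟩ := exists_forall_mem_Icc_eLpNorm_fwdDiff_le (continuousOn_primitive_Ici hf) hS₀ hS
    (fun θ hθ ↦ ((memLp_congr_ae (fwdDiff_primitive_ae_eq hf (hS₀ hθ))).2 (hFp θ hθ)).2.ne) R
  exact ⟨B, fun θ hθ ↦ eLpNorm_congr_ae (fwdDiff_primitive_ae_eq hf hθ.1) ▸ hB θ hθ⟩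

end IntervalAverage

section RealExponent

variable {α E : Type*} [MeasurableSpace α] [NormedAddCommGroup E] {μ : Measure α} {g : α → E}
  {p : ℝ}

theorem integrable_norm_rpow_iff_memLp_ofReal (hp : 0 < p) (hg : AEStronglyMeasurable g μ) :
    Integrable (fun t ↦ ‖g t‖ ^ p) μ ↔ MemLp g (ENNReal.ofReal p) μ := by
  simpa only [ENNReal.toReal_ofReal hp.le] using
    integrable_norm_rpow_iff hg (ENNReal.ofReal_pos.2 hp).ne' ENNReal.ofReal_ne_top

theorem integral_norm_rpow_rpow_one_div_le_of_eLpNorm_le (hp : 0 < p)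
    (hg : AEStronglyMeasurable g μ) {B : ℝ≥0} (hB : eLpNorm g (ENNReal.ofReal p) μ ≤ B) :
    (∫ t, ‖g t‖ ^ p ∂μ) ^ (1 / p) ≤ B := by
  have hnorm := lpNorm_eq_integral_norm_rpow_toReal
    (ENNReal.ofReal_pos.2 hp).ne' ENNReal.ofReal_ne_top hg
  rw [ENNReal.toReal_ofReal hp.le, ← toReal_eLpNorm hg] at hnorm
  rw [one_div, ← hnorm]
  exact ENNReal.toReal_le_coe_of_le_coe hB

end RealExponent

/-- Lemma 2.1: if for every `θ ∈ (0,1]` the interval average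
`t ↦ ∫_t^{t+θ} f(s) ds` lies in `L^p([0,∞))`, then its `L^p`-norms are bounded
uniformly in `θ` by a constant `B > 0`. -/
theorem lp_norm_of_interval_average_uniformly_bounded
    (p : ℝ) (hp : 1 ≤ p) (f : ℝ → ℝ)
    (hf : LocallyIntegrableOn f (Ici 0))
    (hFp : ∀ θ ∈ Ioc (0:ℝ) 1,
      IntegrableOn (fun t => |∫ s in t..(t + θ), f s| ^ p) (Ici 0)) :
    ∃ B > (0:ℝ), ∀ θ ∈ Ioc (0:ℝ) 1,
      (∫ t in Ici (0:ℝ), |∫ s in t..(t + θ), f s| ^ p) ^ (1 / p) ≤ B := by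
  have hp₀ : 0 < p := zero_lt_one.trans_le hp
  have hmeas (θ : ℝ) (hθ : θ ∈ Ioc 0 1) := aestronglyMeasurable_intervalIntegral_add hf hθ.1.le
  have hS : ¬ IsMeagre (Ioc (0 : ℝ) 1) := not_isMeagre_of_nonempty_interior (by simp)
  obtain ⟨B, hB⟩ := lp_norm_of_interval_average_uniformly_bounded_general
    (ENNReal.ofReal_pos.2 hp₀).ne' hf (fun θ hθ ↦ hθ.1.le) hS
    (fun θ hθ ↦ (integrable_norm_rpow_iff_memLp_ofReal hp₀ (hmeas θ hθ)).1 (hFp θ hθ)) 1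
  exact ⟨B + 1, by positivity, fun θ hθ ↦
    (integral_norm_rpow_rpow_one_div_le_of_eLpNorm_le hp₀ (hmeas θ hθ)
      (hB θ (Ioc_subset_Icc_self hθ))).trans (by simp)⟩
end

section
/- Let p ≥ 1 and let f : [0,∞) → ℝ be locally integrable, extended to ℝ by setting f(t) = 0 for t < 0. Suppose that for every θ ∈ (0,1] the function t ↦ ∫_t^{t+θ} f(s) ds belongs to L^p([0,∞)). Then the function f₁ defined by f₁(t) = ∫_{t-1}^t f(s) ds for t ≥ 0 is continuous on [0,∞) and belongs to L^p([0,∞)). -/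
open MeasureTheory Set Filter

/-!
The backward average `∫_{t-h}^t f` is the forward average `∫_t^{t+h} f` translated by `h`, so its
`p`-th power inherits integrability near `+∞`. On the remaining bounded interval the backward
average is continuous, hence its `p`-th power is integrable there too.
-/

theorem locallyIntegrable_indicator_iff {X E : Type*} [TopologicalSpace X] [MeasurableSpace X]
    [OpensMeasurableSpace X] [NormedAddCommGroup E] {f : X → E} {s : Set X} {μ : Measure X}
    (hs : IsClosed s) : LocallyIntegrable (s.indicator f) μ ↔ LocallyIntegrableOn f s μ := by
  rw [locallyIntegrableOn_iff_locallyIntegrable_restrict hs]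
  simp only [LocallyIntegrable, IntegrableAtFilter, IntegrableOn,
    integrable_indicator_iff hs.measurableSet, Measure.restrict_comm hs.measurableSet]

theorem continuous_intervalIntegral_of_locallyIntegrable {X E : Type*} [TopologicalSpace X]
    [NormedAddCommGroup E] [NormedSpace ℝ E] {f : ℝ → E} {μ : Measure ℝ} [NullSingletonClass μ]
    (hf : LocallyIntegrable f μ) {a b : X → ℝ} (ha : Continuous a) (hb : Continuous b) :
    Continuous fun x => ∫ s in a x..b x, f s ∂μ := by
  have hf_int (c d : ℝ) : IntervalIntegrable f μ c d :=
    (hf.integrableOn_isCompact isCompact_uIcc).intervalIntegrable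
  have h_primitive : Continuous fun c => ∫ s in (0 : ℝ)..c, f s ∂μ :=
    intervalIntegral.continuous_primitive hf_int 0
  exact ((h_primitive.comp hb).sub (h_primitive.comp ha)).congr fun _ =>
    intervalIntegral.integral_interval_sub_left (hf_int _ _) (hf_int _ _)

theorem integrableOn_Ici_comp_sub_right_iff {G E : Type*} [AddCommGroup G] [PartialOrder G]
    [IsOrderedAddMonoid G] [MeasurableSpace G] [MeasurableAdd G] [NormedAddCommGroup E]
    {μ : Measure G} [μ.IsAddRightInvariant] {g : G → E} {a c : G} :
    IntegrableOn (fun t => g (t - c)) (Ici (a + c)) μ ↔ IntegrableOn g (Ici a) μ := by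
  rw [← preimage_sub_const_Ici]
  exact (measurePreserving_sub_right μ c).integrableOn_comp_preimage
    (MeasurableEquiv.subRight c).measurableEmbedding

theorem moving_average_continuous_and_Lp_general {E : Type*} [NormedAddCommGroup E]
    [NormedSpace ℝ E] {f : ℝ → E} (hf : LocallyIntegrable f) {p : ℝ} (hp : 0 ≤ p) {a b h : ℝ}
    (hfp : IntegrableOn (fun t => ‖∫ s in t..(t + h), f s‖ ^ p) (Ici a)) :
    Continuous (fun t => ∫ s in (t - h)..t, f s) ∧
    IntegrableOn (fun t => ‖∫ s in (t - h)..t, f s‖ ^ p) (Ici b) := by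
  have h_cont : Continuous fun t => ∫ s in (t - h)..t, f s :=
    continuous_intervalIntegral_of_locallyIntegrable hf (by fun_prop) continuous_id
  have h_shift : IntegrableOn (fun t => ‖∫ s in (t - h)..t, f s‖ ^ p) (Ici (a + h)) := by
    simpa only [sub_add_cancel] using integrableOn_Ici_comp_sub_right_iff (c := h).2 hfp
  have h_local : LocallyIntegrable fun t => ‖∫ s in (t - h)..t, f s‖ ^ p :=
    (h_cont.norm.rpow_const fun _ => Or.inr hp).locallyIntegrable
  exact ⟨h_cont, integrableOn_Ici_iff_integrableAtFilter_atTop.2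
    ⟨⟨Ici (a + h), Ici_mem_atTop _, h_shift⟩, h_local.locallyIntegrableOn _⟩⟩

/-- with `f` locally integrable on `[0,∞)` and extended by zero for `t < 0`,
if every interval average `t ↦ ∫_t^{t+θ} f(s) ds` (`θ ∈ (0,1]`) is in `L^p([0,∞))`, then
`f₁(t) = ∫_{t-1}^t f(s) ds` is continuous on `[0,∞)` and belongs to `L^p([0,∞))`. -/
theorem moving_average_continuous_and_Lp
    (p : ℝ) (hp : 1 ≤ p) (f : ℝ → ℝ)
    (hf : LocallyIntegrableOn f (Ici 0))
    (hf0 : ∀ t < (0:ℝ), f t = 0)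
    (hFp : ∀ θ ∈ Ioc (0:ℝ) 1,
      IntegrableOn (fun t => |∫ s in t..(t + θ), f s| ^ p) (Ici 0)) :
    ContinuousOn (fun t => ∫ s in (t - 1)..t, f s) (Ici 0) ∧
    IntegrableOn (fun t => |∫ s in (t - 1)..t, f s| ^ p) (Ici 0) := by
  have hf_supp : Function.support f ⊆ Ici 0 :=
    fun t ht => not_lt.1 fun ht_neg => ht (hf0 t ht_neg)
  have hf_loc : LocallyIntegrable f := by
    rwa [← locallyIntegrable_indicator_iff isClosed_Ici, indicator_eq_self.2 hf_supp] at hf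
  exact (moving_average_continuous_and_Lp_general hf_loc (zero_le_one.trans hp)
    (hFp 1 ⟨one_pos, le_rfl⟩)).imp_left Continuous.continuousOn
end

section
/- Let p ≥ 1 and let f : [0,∞) → ℝ be locally integrable, extended by zero on (−∞,0), with f₁(t) = ∫_{t-1}^t f(s) ds and f₂ = f − f₁. Then for every t ≥ 1, |∫_0^t f₂(s) ds|^p ≤ ∫_0^1 |∫_{t+v-1}^t f(u) du|^p dv, and consequently ∫_1^∞ |∫_0^t f₂(s) ds|^p dt ≤ ∫_0^1 ( ∫_0^∞ |∫_t^{t+v} f(u) du|^p dt ) dv. -/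
open MeasureTheory Set Filter

/-!
Let `F` be a primitive of `f`. Both `∫_a^b (f - f₁)` and the increment between `a` and `b` of
`t ↦ F t - ⨍_{t-h}^t F = ⨍_0^h (∫_{t-v}^t f) dv` equal the same combination of integrals of `F`,
where `f₁` is the average of `f` over the trailing window of length `h`. Since `f` vanishes on
`(-∞, 0)`, so does the contribution of `a = 0`, and `∫_0^t (f - f₁) = ⨍_0^h (∫_{t-v}^t f) dv`.
Jensen's inequality for `x ↦ x ^ p` gives the pointwise bound. Integrating it over `t ≥ h`,
exchanging the integrals and translating `t` by `v ≤ h` gives the integrated one.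
-/

section MeasureTheoreticPreliminaries

lemma locallyIntegrable_of_forall_notMem_eq_zero {X E : Type*} [TopologicalSpace X]
    [MeasurableSpace X] [OpensMeasurableSpace X] [NormedAddCommGroup E] {μ : Measure X} {s : Set X}
    {f : X → E} (hs : IsClosed s) (hf : LocallyIntegrableOn f s μ) (hf0 : ∀ x ∉ s, f x = 0) :
    LocallyIntegrable f μ := by
  have hcompl : IntegrableOn f sᶜ μ :=
    integrableOn_zero.congr_fun (fun x hx ↦ (hf0 x hx).symm) hs.measurableSet.compl
  intro x
  by_cases hx : x ∈ s
  · rw [← nhdsWithin_univ, ← union_compl_self s, nhdsWithin_union]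
    exact IntegrableAtFilter.sup_iff.2 ⟨hf x hx, sᶜ, self_mem_nhdsWithin, hcompl⟩
  · exact ⟨sᶜ, hs.isOpen_compl.mem_nhds hx, hcompl⟩

lemma intervalIntegrable_of_locallyIntegrable {E : Type*} [NormedAddCommGroup E] {μ : Measure ℝ}
    {f : ℝ → E} (hf : LocallyIntegrable f μ) (a b : ℝ) : IntervalIntegrable f μ a b :=
  (hf.integrableOn_isCompact isCompact_uIcc).intervalIntegrable

lemma norm_average_rpow_le {α E : Type*} [MeasurableSpace α] [NormedAddCommGroup E]
    [NormedSpace ℝ E] {μ : Measure α} [IsFiniteMeasure μ] [NeZero μ] {p : ℝ} (hp : 1 ≤ p)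
    {g : α → E} (hg : Integrable g μ) (hgp : Integrable (fun x ↦ ‖g x‖ ^ p) μ) :
    ‖⨍ x, g x ∂μ‖ ^ p ≤ ⨍ x, ‖g x‖ ^ p ∂μ := by
  have hp0 : 0 ≤ p := zero_le_one.trans hp
  calc
    ‖⨍ x, g x ∂μ‖ ^ p ≤ (⨍ x, ‖g x‖ ∂μ) ^ p :=
      Real.rpow_le_rpow (norm_nonneg _) (norm_integral_le_integral_norm g) hp0
    _ ≤ ⨍ x, ‖g x‖ ^ p ∂μ :=
      (convexOn_rpow hp).map_average_le (continuousOn_id.rpow_const fun _ _ ↦ Or.inr hp0)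
        isClosed_Ici (ae_of_all _ fun x ↦ norm_nonneg (g x)) hg.norm hgp

lemma setLIntegral_Ici_comp_sub_right (g : ℝ → ENNReal) (a v : ℝ) :
    ∫⁻ t in Ici a, g (t - v) = ∫⁻ t in Ici (a - v), g t := by
  simpa using (measurePreserving_sub_right volume v).setLIntegral_comp_preimage_emb
    (measurableEmbedding_subRight v) g (Ici (a - v))

lemma lintegral_Ici_lintegral_comp_sub_le {k : ℝ → ℝ → ENNReal}
    (hk : Measurable (Function.uncurry k)) {s : Set ℝ} (hs : MeasurableSet s) {a b : ℝ}
    (hsab : ∀ v ∈ s, a ≤ b - v) :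
    ∫⁻ t in Ici b, ∫⁻ v in s, k (t - v) v ≤ ∫⁻ v in s, ∫⁻ t in Ici a, k t v := by
  have hshear : Measurable fun q : ℝ × ℝ ↦ k (q.1 - q.2) q.2 :=
    hk.comp ((measurable_fst.sub measurable_snd).prodMk measurable_snd)
  calc
    ∫⁻ t in Ici b, ∫⁻ v in s, k (t - v) v
      = ∫⁻ v in s, ∫⁻ t in Ici b, k (t - v) v := lintegral_lintegral_swap hshear.aemeasurable
    _ = ∫⁻ v in s, ∫⁻ t in Ici (b - v), k t v :=
      lintegral_congr fun v ↦ setLIntegral_Ici_comp_sub_right (fun t ↦ k t v) b v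
    _ ≤ ∫⁻ v in s, ∫⁻ t in Ici a, k t v := setLIntegral_mono' hs fun v hv ↦
      lintegral_mono_set (Ici_subset_Ici.2 (hsab v hv))

end MeasureTheoreticPreliminaries

section IntervalIntegrals

variable {E : Type*} [NormedAddCommGroup E] [NormedSpace ℝ E] {f : ℝ → E} {p : ℝ} {μ : Measure ℝ}

lemma continuous_intervalIntegral_endpoints [NullSingletonClass μ] (hf : LocallyIntegrable f μ) :
    Continuous fun q : ℝ × ℝ ↦ ∫ u in q.1..q.2, f u ∂μ := by
  have hfi := intervalIntegrable_of_locallyIntegrable hf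
  have hF := intervalIntegral.continuous_primitive hfi 0
  refine ((hF.comp continuous_snd).sub (hF.comp continuous_fst)).congr fun q ↦ ?_
  exact intervalIntegral.integral_interval_sub_left (hfi 0 q.2) (hfi 0 q.1)

lemma intervalIntegral_eq_zero_of_forall_lt [NullSingletonClass μ] {a b c : ℝ}
    (hf0 : ∀ t < c, f t = 0) (ha : a ≤ c) (hb : b ≤ c) : ∫ u in a..b, f u ∂μ = 0 := by
  refine intervalIntegral.integral_zero_ae ?_
  filter_upwards [Measure.ae_ne μ c] with u huc hu
  exact hf0 u (lt_of_le_of_ne (hu.2.trans (max_le ha hb)) huc)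

lemma intervalAverage_comp_sub_left (g : ℝ → E) (h : ℝ) :
    ⨍ v in 0..h, g (h - v) = ⨍ v in 0..h, g v := by
  simp [interval_average_eq]

lemma norm_intervalAverage_rpow_le {a b : ℝ} (hab : a ≠ b) (hp : 1 ≤ p) {g : ℝ → E}
    (hg : Continuous g) : ‖⨍ x in a..b, g x‖ ^ p ≤ ⨍ x in a..b, ‖g x‖ ^ p := by
  have : IsFiniteMeasure (volume.restrict (uIoc a b)) :=
    isFiniteMeasure_restrict.2 (by simp)
  have : NeZero (volume.restrict (uIoc a b)) := ⟨by simpa [sub_eq_zero] using hab.symm⟩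
  have hgp : Continuous fun x ↦ ‖g x‖ ^ p :=
    hg.norm.rpow_const fun _ ↦ Or.inr (zero_le_one.trans hp)
  exact norm_average_rpow_le hp hg.integrableOn_uIoc hgp.integrableOn_uIoc

end IntervalIntegrals

section TrailingAverage

variable {E : Type*} [NormedAddCommGroup E] [NormedSpace ℝ E] {f : ℝ → E} {h p : ℝ}

/-- The average of `f` over the window of length `h` ending at `t`: for `h = 1` this is the function
`f₁` of the decomposition `f = f₁ + f₂`. -/
noncomputable def trailingAverage (h : ℝ) (f : ℝ → E) (t : ℝ) : E :=
  ⨍ u in (t - h)..t, f u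

lemma continuous_trailingAverage (h : ℝ) (hf : LocallyIntegrable f) :
    Continuous (trailingAverage h f) := by
  have hwindow : Continuous fun t ↦ ∫ u in (t - h)..t, f u :=
    (continuous_intervalIntegral_endpoints hf).comp (by fun_prop : Continuous fun t ↦ (t - h, t))
  refine (hwindow.const_smul h⁻¹).congr fun t ↦ ?_
  simp only [trailingAverage, interval_average_eq, sub_sub_cancel, Pi.smul_apply]

lemma integral_trailingAverage (hf : LocallyIntegrable f) (a b : ℝ) :
    ∫ s in a..b, trailingAverage h f s
      = trailingAverage h (fun x ↦ ∫ u in 0..x, f u) b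
        - trailingAverage h (fun x ↦ ∫ u in 0..x, f u) a := by
  have hfi := intervalIntegrable_of_locallyIntegrable hf
  set F : ℝ → E := fun x ↦ ∫ u in 0..x, f u
  have hF : Continuous F := intervalIntegral.continuous_primitive hfi 0
  have hFi (c d : ℝ) : IntervalIntegrable F volume c d := hF.intervalIntegrable c d
  have hFcomp : Continuous fun s ↦ F (s - h) := by fun_prop
  have hsub (s : ℝ) : ∫ u in (s - h)..s, f u = F s - F (s - h) :=
    (intervalIntegral.integral_interval_sub_left (hfi _ _) (hfi _ _)).symm
  simp only [trailingAverage, interval_average_eq, hsub, sub_sub_cancel]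
  rw [intervalIntegral.integral_smul, ← smul_sub, intervalIntegral.integral_sub (hFi a b)
      (hFcomp.intervalIntegrable a b),
    intervalIntegral.integral_comp_sub_right F,
    intervalIntegral.integral_interval_sub_interval_comm' (hFi _ _) (hFi _ _) (hFi _ _)]

variable [CompleteSpace E]

lemma intervalAverage_integral_trailing (hh : h ≠ 0) (hf : LocallyIntegrable f) (t : ℝ) :
    ⨍ v in 0..h, ∫ u in (t - v)..t, f u
      = (∫ u in 0..t, f u) - trailingAverage h (fun x ↦ ∫ u in 0..x, f u) t := by
  have hfi := intervalIntegrable_of_locallyIntegrable hf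
  set F : ℝ → E := fun x ↦ ∫ u in 0..x, f u
  have hF : Continuous F := intervalIntegral.continuous_primitive hfi 0
  have hFcomp : Continuous fun v ↦ F (t - v) := by fun_prop
  have hsub (v : ℝ) : ∫ u in (t - v)..t, f u = F t - F (t - v) :=
    (intervalIntegral.integral_interval_sub_left (hfi _ _) (hfi _ _)).symm
  simp only [hsub, trailingAverage, interval_average_eq, sub_zero, sub_sub_cancel]
  rw [intervalIntegral.integral_sub (by simp) (hFcomp.intervalIntegrable 0 h),
    intervalIntegral.integral_comp_sub_left F, intervalIntegral.integral_const, smul_sub,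
    sub_zero, sub_zero, inv_smul_smul₀ hh]

lemma integral_sub_trailingAverage (hh : h ≠ 0) (hf : LocallyIntegrable f) (a b : ℝ) :
    ∫ s in a..b, (f s - trailingAverage h f s)
      = (⨍ v in 0..h, ∫ u in (b - v)..b, f u) - ⨍ v in 0..h, ∫ u in (a - v)..a, f u := by
  have hfi := intervalIntegrable_of_locallyIntegrable hf
  rw [intervalIntegral.integral_sub (hfi a b)
      ((continuous_trailingAverage h hf).intervalIntegrable a b),
    integral_trailingAverage hf, intervalAverage_integral_trailing hh hf,
    intervalAverage_integral_trailing hh hf,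
    ← intervalIntegral.integral_interval_sub_left (hfi 0 b) (hfi 0 a)]
  abel

lemma integral_sub_trailingAverage_of_forall_neg (hh : 0 < h) (hf : LocallyIntegrable f)
    (hf0 : ∀ t < 0, f t = 0) (t : ℝ) :
    ∫ s in 0..t, (f s - trailingAverage h f s) = ⨍ v in 0..h, ∫ u in (t - v)..t, f u := by
  have hinitial : ⨍ v in 0..h, ∫ u in (0 - v)..0, f u = 0 := by
    rw [interval_average_eq, intervalIntegral.integral_zero_ae, smul_zero]
    refine ae_of_all _ fun v hv ↦ intervalIntegral_eq_zero_of_forall_lt hf0 ?_ le_rfl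
    rw [uIoc_of_le hh.le] at hv
    linarith [hv.1]
  rw [integral_sub_trailingAverage hh.ne' hf, hinitial, sub_zero]

lemma norm_integral_sub_trailingAverage_rpow_le (hp : 1 ≤ p) (hh : 0 < h)
    (hf : LocallyIntegrable f) (hf0 : ∀ t < 0, f t = 0) (t : ℝ) :
    ‖∫ s in 0..t, (f s - trailingAverage h f s)‖ ^ p
      ≤ ⨍ v in 0..h, ‖∫ u in (t - v)..t, f u‖ ^ p := by
  rw [integral_sub_trailingAverage_of_forall_neg hh hf hf0]
  exact norm_intervalAverage_rpow_le hh.ne hp ((continuous_intervalIntegral_endpoints hf).comp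
    (by fun_prop : Continuous fun v ↦ (t - v, t)))

lemma ofReal_norm_integral_sub_trailingAverage_rpow_le (hp : 1 ≤ p) (hh : 0 < h)
    (hf : LocallyIntegrable f) (hf0 : ∀ t < 0, f t = 0) (t : ℝ) :
    ENNReal.ofReal (‖∫ s in 0..t, (f s - trailingAverage h f s)‖ ^ p)
      ≤ (∫⁻ v in Ioc 0 h, ENNReal.ofReal (‖∫ u in (t - v)..t, f u‖ ^ p)) / ENNReal.ofReal h := by
  have hcont : Continuous fun v ↦ ‖∫ u in (t - v)..t, f u‖ ^ p :=
    ((continuous_intervalIntegral_endpoints hf).comp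
      (by fun_prop : Continuous fun v ↦ (t - v, t))).norm.rpow_const
        fun _ ↦ Or.inr (zero_le_one.trans hp)
  calc
    _ ≤ ENNReal.ofReal (⨍ v in 0..h, ‖∫ u in (t - v)..t, f u‖ ^ p) :=
      ENNReal.ofReal_le_ofReal (norm_integral_sub_trailingAverage_rpow_le hp hh hf hf0 t)
    _ = (∫⁻ v in Ioc 0 h, ENNReal.ofReal (‖∫ u in (t - v)..t, f u‖ ^ p)) / ENNReal.ofReal h := by
      rw [uIoc_of_le hh.le, ofReal_setAverage hcont.integrableOn_Ioc
        (ae_of_all _ fun v ↦ Real.rpow_nonneg (norm_nonneg _) p), Real.volume_Ioc, sub_zero]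

lemma lintegral_norm_integral_sub_trailingAverage_rpow_le (hp : 1 ≤ p) (hh : 0 < h)
    (hf : LocallyIntegrable f) (hf0 : ∀ t < 0, f t = 0) :
    ∫⁻ t in Ici h, ENNReal.ofReal (‖∫ s in 0..t, (f s - trailingAverage h f s)‖ ^ p)
      ≤ (∫⁻ v in Ioc 0 h, ∫⁻ t in Ici 0, ENNReal.ofReal (‖∫ u in t..(t + v), f u‖ ^ p))
        / ENNReal.ofReal h := by
  set k : ℝ → ℝ → ENNReal := fun t v ↦ ENNReal.ofReal (‖∫ u in t..(t + v), f u‖ ^ p)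
  have hk : Measurable (Function.uncurry k) := by
    have hwindow : Continuous fun q : ℝ × ℝ ↦ ∫ u in q.1..(q.1 + q.2), f u :=
      (continuous_intervalIntegral_endpoints hf).comp
        (by fun_prop : Continuous fun q : ℝ × ℝ ↦ (q.1, q.1 + q.2))
    exact (hwindow.norm.measurable.pow_const p).ennreal_ofReal
  calc
    _ ≤ ∫⁻ t in Ici h, (∫⁻ v in Ioc 0 h, k (t - v) v) / ENNReal.ofReal h :=
      lintegral_mono fun t ↦ by
        simpa only [k, sub_add_cancel] using
          ofReal_norm_integral_sub_trailingAverage_rpow_le hp hh hf hf0 t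
    _ = (∫⁻ t in Ici h, ∫⁻ v in Ioc 0 h, k (t - v) v) / ENNReal.ofReal h := by
      simp only [div_eq_mul_inv]
      exact lintegral_mul_const' _ _ (ENNReal.inv_ne_top.2 (ENNReal.ofReal_pos.2 hh).ne')
    _ ≤ (∫⁻ v in Ioc 0 h, ∫⁻ t in Ici 0, k t v) / ENNReal.ofReal h :=
      ENNReal.div_le_div_right (lintegral_Ici_lintegral_comp_sub_le hk measurableSet_Ioc
        fun v hv ↦ sub_nonneg.2 hv.2) _

theorem jensen_bound_for_f2_general (hp : 1 ≤ p) (hh : 0 < h)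
    (hf : LocallyIntegrableOn f (Ici 0)) (hf0 : ∀ t < 0, f t = 0) :
    (∀ t, ‖∫ s in 0..t, (f s - trailingAverage h f s)‖ ^ p
      ≤ ⨍ v in 0..h, ‖∫ u in (t + v - h)..t, f u‖ ^ p) ∧
    ∫⁻ t in Ici h, ENNReal.ofReal (‖∫ s in 0..t, (f s - trailingAverage h f s)‖ ^ p)
      ≤ (∫⁻ v in Ioc 0 h, ∫⁻ t in Ici 0, ENNReal.ofReal (‖∫ u in t..(t + v), f u‖ ^ p))
        / ENNReal.ofReal h := by
  have hloc : LocallyIntegrable f := locallyIntegrable_of_forall_notMem_eq_zero isClosed_Ici hf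
    fun t ht ↦ hf0 t (not_le.1 ht)
  refine ⟨fun t ↦ ?_, lintegral_norm_integral_sub_trailingAverage_rpow_le hp hh hloc hf0⟩
  calc
    _ ≤ ⨍ v in 0..h, ‖∫ u in (t - v)..t, f u‖ ^ p :=
      norm_integral_sub_trailingAverage_rpow_le hp hh hloc hf0 t
    _ = ⨍ v in 0..h, ‖∫ u in (t - (h - v))..t, f u‖ ^ p :=
      (intervalAverage_comp_sub_left (fun v ↦ ‖∫ u in (t - v)..t, f u‖ ^ p) h).symm
    _ = ⨍ v in 0..h, ‖∫ u in (t + v - h)..t, f u‖ ^ p := by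
      simp only [sub_sub_eq_add_sub]

end TrailingAverage

/-- with `f` locally integrable on `[0,∞)`, extended by zero on `(-∞,0)`,
`f₁(t) = ∫_{t-1}^t f(s) ds` and `f₂ = f - f₁`, one has for every `t ≥ 1` the Jensen bound
`|∫_0^t f₂(s) ds|^p ≤ ∫_0^1 |∫_{t+v-1}^t f(u) du|^p dv`, and consequently
`∫_1^∞ |∫_0^t f₂(s) ds|^p dt ≤ ∫_0^1 (∫_0^∞ |∫_t^{t+v} f(u) du|^p dt) dv`. -/
theorem jensen_bound_for_f2
    (p : ℝ) (hp : 1 ≤ p) (f : ℝ → ℝ)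
    (hf : LocallyIntegrableOn f (Ici 0))
    (hf0 : ∀ t < (0:ℝ), f t = 0) :
    (∀ t ≥ (1:ℝ),
      |∫ s in (0:ℝ)..t, (f s - ∫ u in (s - 1)..s, f u)| ^ p
        ≤ ∫ v in (0:ℝ)..1, |∫ u in (t + v - 1)..t, f u| ^ p) ∧
    (∫⁻ t in Ici (1:ℝ),
        ENNReal.ofReal (|∫ s in (0:ℝ)..t, (f s - ∫ u in (s - 1)..s, f u)| ^ p)
      ≤ ∫⁻ v in Ioc (0:ℝ) 1,
          ∫⁻ t in Ici (0:ℝ), ENNReal.ofReal (|∫ u in t..(t + v), f u| ^ p)) := by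
  have hgeneral := jensen_bound_for_f2_general hp one_pos hf hf0
  simp only [trailingAverage, interval_average_eq, sub_sub_cancel, sub_zero, inv_one, one_smul,
    ENNReal.ofReal_one, div_one, Real.norm_eq_abs] at hgeneral
  exact ⟨fun t _ ↦ hgeneral.1 t, hgeneral.2⟩
end

section
/- Let ν be a finite signed Borel measure on [0,∞) and let r : [0,∞) → ℝ be absolutely continuous with r(0) = 1 and r′(t) = ∫_{[0,t]} r(t−s) dν(s) for almost every t > 0. If r ∈ L¹([0,∞)), then r′ ∈ L¹([0,∞)), r(t) → 0 as t → ∞, and r ∈ L^p([0,∞)) for every p ≥ 1. -/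
/-!
Convolution with a finite measure maps `L¹` to itself, so the equation puts `r'` in `L¹([0,∞))`.
Hence `r` is bounded and has a limit at infinity, which must vanish because `r` is integrable.
A bounded integrable function has all powers `|r| ^ p` with `p ≥ 1` integrable.
-/

open MeasureTheory Set Filter

/-- The integral of `g` over the set `A` against the finite signed Borel measure `ν`,
defined through the Jordan decomposition `ν = ν⁺ - ν⁻`. -/
noncomputable def signedSetIntegral (ν : MeasureTheory.SignedMeasure ℝ) (g : ℝ → ℝ)
    (A : Set ℝ) : ℝ :=
  (∫ s in A, g s ∂ν.toJordanDecomposition.posPart)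
    - ∫ s in A, g s ∂ν.toJordanDecomposition.negPart

section Convolution

variable {E : Type*} [NormedAddCommGroup E] [NormedSpace ℝ E]

lemma integrable_integral_comp_sub {G : Type*} [AddGroup G] [MeasurableSpace G]
    [MeasurableAdd₂ G] [MeasurableNeg G] {μ κ : Measure G} [SFinite μ] [μ.IsAddRightInvariant]
    [IsFiniteMeasure κ] {f : G → E} (hf : Integrable f μ) :
    Integrable (fun t ↦ ∫ s, f (t - s) ∂κ) μ := by
  simpa using
    ((integrable_const (μ := κ) (1 : ℝ)).convolution_integrand
      (ContinuousLinearMap.lsmul ℝ ℝ) hf).integral_prod_left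

lemma integrable_setIntegral_Icc_comp_sub {κ : Measure ℝ} [IsFiniteMeasure κ] {f : ℝ → E}
    (hf : IntegrableOn f (Ici 0)) :
    Integrable (fun t ↦ ∫ s in Icc 0 t, f (t - s) ∂κ) := by
  refine (integrable_integral_comp_sub (κ := κ.restrict (Ici 0))
    (hf.integrable_indicator measurableSet_Ici)).congr (.of_forall fun t ↦ ?_)
  have indicator_comp_sub :
      (fun s ↦ (Ici 0).indicator f (t - s)) = (Iic t).indicator fun s ↦ f (t - s) := by
    ext s
    simp only [indicator, mem_Ici, mem_Iic, sub_nonneg]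
  simp only [indicator_comp_sub]
  rw [setIntegral_indicator measurableSet_Iic, Ici_inter_Iic]

end Convolution

section Primitive

variable {E : Type*} [NormedAddCommGroup E] [NormedSpace ℝ E] {f f' : ℝ → E} {a : ℝ}

lemma norm_le_of_eq_add_intervalIntegral (hf' : IntegrableOn f' (Ioi a))
    (hf : ∀ t ≥ a, f t = f a + ∫ s in a..t, f' s) {t : ℝ} (ht : a ≤ t) :
    ‖f t‖ ≤ ‖f a‖ + ∫ s in Ioi a, ‖f' s‖ := by
  calc ‖f t‖ ≤ ‖f a‖ + ‖∫ s in a..t, f' s‖ := by rw [hf t ht]; exact norm_add_le _ _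
    _ ≤ ‖f a‖ + ∫ s in Ioc a t, ‖f' s‖ := by
      rw [intervalIntegral.integral_of_le ht]
      gcongr
      exact norm_integral_le_integral_norm _
    _ ≤ ‖f a‖ + ∫ s in Ioi a, ‖f' s‖ := by
      gcongr 1
      exact setIntegral_mono_set hf'.norm (.of_forall fun _ ↦ norm_nonneg _)
        Ioc_subset_Ioi_self.eventuallyLE

lemma tendsto_zero_of_eq_add_intervalIntegral (hf' : IntegrableOn f' (Ioi a))
    (hf : ∀ t ≥ a, f t = f a + ∫ s in a..t, f' s) (hfL1 : IntegrableOn f (Ici a)) :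
    Tendsto f atTop (nhds 0) := by
  have tendsto_limit : Tendsto f atTop (nhds (f a + ∫ s in Ioi a, f' s)) := by
    refine ((intervalIntegral_tendsto_integral_Ioi a hf' tendsto_id).const_add (f a)).congr' ?_
    filter_upwards [eventually_ge_atTop a] with t ht using (hf t ht).symm
  have volume_eq_top : ∀ s ∈ (atTop : Filter ℝ), volume s = ⊤ := fun s hs ↦ by
    obtain ⟨b, hb⟩ := mem_atTop_sets.1 hs
    exact measure_mono_top hb Real.volume_Ici
  have limit_eq_zero : f a + ∫ s in Ioi a, f' s = 0 :=
    IntegrableAtFilter.eq_zero_of_tendsto ⟨Ici a, Ici_mem_atTop a, hfL1⟩ volume_eq_top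
      tendsto_limit
  exact limit_eq_zero ▸ tendsto_limit

end Primitive

lemma integrable_norm_rpow_of_ae_bound {α E : Type*} [MeasurableSpace α] [NormedAddCommGroup E]
    {μ : Measure α} {f : α → E} {C p q : ℝ} (hf : AEStronglyMeasurable f μ) (hp : 0 ≤ p)
    (hpq : p ≤ q) (hfp : Integrable (fun x ↦ ‖f x‖ ^ p) μ) (hC : ∀ᵐ x ∂μ, ‖f x‖ ≤ C) :
    Integrable (fun x ↦ ‖f x‖ ^ q) μ := by
  refine (hfp.const_mul (C ^ (q - p))).mono'
    (hf.norm.aemeasurable.pow_const q).aestronglyMeasurable ?_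
  filter_upwards [hC] with x hx
  calc ‖‖f x‖ ^ q‖ = ‖f x‖ ^ (q - p) * ‖f x‖ ^ p := by
        rw [Real.norm_of_nonneg (by positivity),
          ← Real.rpow_add_of_nonneg (norm_nonneg _) (sub_nonneg.2 hpq) hp, sub_add_cancel]
    _ ≤ C ^ (q - p) * ‖f x‖ ^ p := by gcongr

theorem resolvent_L1_implies_derivative_L1_limit_zero_and_Lp_general
    {E : Type*} [NormedAddCommGroup E] [NormedSpace ℝ E] [CompleteSpace E]
    (ν : SignedMeasure ℝ) (r r' : ℝ → E)
    (hFTC : ∀ t ≥ (0 : ℝ), r t = r 0 + ∫ s in (0 : ℝ)..t, r' s)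
    (hres : ∀ᵐ t ∂(volume.restrict (Ioi (0 : ℝ))),
      r' t = (∫ s in Icc 0 t, r (t - s) ∂ν.toJordanDecomposition.posPart)
        - ∫ s in Icc 0 t, r (t - s) ∂ν.toJordanDecomposition.negPart)
    (hrL1 : IntegrableOn r (Ici 0)) :
    IntegrableOn r' (Ici 0) ∧
    Tendsto r atTop (nhds 0) ∧
    ∀ p ≥ (1 : ℝ), IntegrableOn (fun t ↦ ‖r t‖ ^ p) (Ici 0) := by
  have hr' : IntegrableOn r' (Ioi 0) :=
    ((integrable_setIntegral_Icc_comp_sub hrL1).sub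
      (integrable_setIntegral_Icc_comp_sub hrL1)).integrableOn.congr (hres.mono fun _ h ↦ h.symm)
  have r_bounded : ∀ᵐ t ∂volume.restrict (Ici 0), ‖r t‖ ≤ ‖r 0‖ + ∫ s in Ioi 0, ‖r' s‖ :=
    ae_restrict_of_forall_mem measurableSet_Ici fun _ ht ↦
      norm_le_of_eq_add_intervalIntegral hr' hFTC ht
  exact ⟨(integrableOn_Ici_iff_integrableOn_Ioi).2 hr',
    tendsto_zero_of_eq_add_intervalIntegral hr' hFTC hrL1,
    fun p hp ↦ integrable_norm_rpow_of_ae_bound hrL1.aestronglyMeasurable zero_le_one hp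
      (by simpa only [Real.rpow_one] using hrL1.norm) r_bounded⟩

/-- if the differential resolvent `r` of the finite signed Borel measure `ν`
on `[0,∞)` (i.e. `r` locally absolutely continuous, `r(0) = 1`,
`r'(t) = ∫_{[0,t]} r(t-s) dν(s)` a.e. `t > 0`) is integrable on `[0,∞)`, then
`r' ∈ L¹([0,∞))`, `r(t) → 0` as `t → ∞`, and `r ∈ L^p([0,∞))` for every `p ≥ 1`. -/
theorem resolvent_L1_implies_derivative_L1_limit_zero_and_Lp
    (ν : MeasureTheory.SignedMeasure ℝ)
    (hν : ν.restrict (Iio 0) = 0)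
    (r r' : ℝ → ℝ)
    (hr'loc : LocallyIntegrableOn r' (Ici 0))
    (hr0 : r 0 = 1)
    (hFTC : ∀ t ≥ (0:ℝ), r t = 1 + ∫ s in (0:ℝ)..t, r' s)
    (hres : ∀ᵐ t ∂(volume.restrict (Ioi (0:ℝ))),
      r' t = signedSetIntegral ν (fun s => r (t - s)) (Icc 0 t))
    (hrL1 : IntegrableOn r (Ici 0)) :
    IntegrableOn r' (Ici 0) ∧
    Tendsto r atTop (nhds 0) ∧
    ∀ p ≥ (1:ℝ), IntegrableOn (fun t => |r t| ^ p) (Ici 0) :=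
  resolvent_L1_implies_derivative_L1_limit_zero_and_Lp_general ν r r' (hr0.symm ▸ hFTC) hres hrL1
end

section
/- Let p ≥ 1, let ν be a finite signed Borel measure on [0,∞), let f : [0,∞) → ℝ be locally integrable, let r be the differential resolvent of ν, and assume r ∈ L¹([0,∞)). For ξ ∈ ℝ let x(·;ξ) denote the solution of x′(t) = ∫_{[0,t]} x(t−s) dν(s) + f(t), x(0) = ξ. Then the following are equivalent: (A) for each θ ∈ (0,1], the function t ↦ ∫_t^{t+θ} f(s) ds belongs to L^p([0,∞)); (B) x(·;ξ) ∈ L^p([0,∞)) for every ξ ∈ ℝ. -/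
open MeasureTheory Set Filter

/-!
Extend `r` and `f` by zero to the negative half-line and write `F` for the primitive of `f` and
`ρ = ν * r`, so that `r = 1 + ∫ ρ` on `[0, ∞)` with `ρ` integrable. The solution is a multiple of
`r ∈ L^p` plus `y = r * f`, and `y` satisfies both `y = F + ρ * F` and `y = F + ∫ (ν * y)`.

If `y ∈ L^p`, then `ν * y ∈ L^p` by Young's inequality, so the second identity writes
`F (t + θ) - F t` as a difference of translates of `y` minus an integral of `ν * y` over a window
of length `θ`, and all of these are in `L^p`.

Conversely, suppose that every increment `F - F (· - θ)` is in `L^p`. Their `L^p` norms depend lower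
semicontinuously on `θ`, so by Baire's theorem they are bounded for `θ` in some interval `(a, b]`.
Let `g` be the sliding average of `f` over windows `[t - b, t - a]`: it is a rescaled increment of
`F`, hence in `L^p`, and the primitive of `f - g` is the average over `θ ∈ (a, b]` of
`F - F (· - θ)`, hence in `L^p` by Minkowski's inequality. Then `r * g ∈ L^p` by Young's inequality,
and `r * (f - g) ∈ L^p` by the first identity applied to `f - g`.
-/

open Function ContinuousLinearMap
open scoped ENNReal NNReal Convolution

namespace Volterra

section Lp

variable {S T E : Type*} [MeasurableSpace S] [MeasurableSpace T] [NormedAddCommGroup E]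
  {μ : Measure S} {lam : Measure T} {p : ℝ≥0∞}

theorem lintegral_rpow_le_mul_measure_univ_rpow {q : ℝ} (hq : 1 ≤ q)
    {k : S → ℝ≥0∞} (hk : AEMeasurable k μ) :
    (∫⁻ s, k s ∂μ) ^ q ≤ (∫⁻ s, k s ^ q ∂μ) * μ univ ^ (q - 1) := by
  have hq₀ : 0 < q := by positivity
  have holder := eLpNorm'_le_eLpNorm'_mul_rpow_measure_univ one_pos hq hk.aestronglyMeasurable
  simp only [eLpNorm', enorm_eq_self, ENNReal.rpow_one, div_one] at holder
  calc (∫⁻ s, k s ∂μ) ^ q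
      ≤ ((∫⁻ s, k s ^ q ∂μ) ^ (1 / q) * μ univ ^ (1 - 1 / q)) ^ q := by gcongr
    _ = (∫⁻ s, k s ^ q ∂μ) * μ univ ^ (q - 1) := by
      rw [ENNReal.mul_rpow_of_nonneg _ _ hq₀.le, ← ENNReal.rpow_mul, ← ENNReal.rpow_mul,
        one_div_mul_cancel hq₀.ne', ENNReal.rpow_one, sub_mul, one_mul, one_div_mul_cancel hq₀.ne']

theorem lintegral_rpow_lintegral_le [IsFiniteMeasure μ] [SFinite lam] {q : ℝ} (hq : 1 ≤ q)
    {k : S → T → ℝ≥0∞} (hk : AEMeasurable (uncurry k) (μ.prod lam)) {C : ℝ≥0∞}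
    (hC : ∀ᵐ s ∂μ, ∫⁻ t, k s t ^ q ∂lam ≤ C) :
    ∫⁻ t, (∫⁻ s, k s t ∂μ) ^ q ∂lam ≤ C * μ univ * μ univ ^ (q - 1) := by
  have hk_swap : AEMeasurable (uncurry fun t s => k s t) (lam.prod μ) := hk.prod_swap
  have hμ_pow : μ univ ^ (q - 1) ≠ ∞ :=
    ENNReal.rpow_ne_top_of_nonneg (by linarith) (measure_ne_top _ _)
  calc ∫⁻ t, (∫⁻ s, k s t ∂μ) ^ q ∂lam
      ≤ ∫⁻ t, (∫⁻ s, k s t ^ q ∂μ) * μ univ ^ (q - 1) ∂lam := by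
        refine lintegral_mono_ae ?_
        filter_upwards [hk_swap.aestronglyMeasurable.prodMk_left] with t ht
        exact lintegral_rpow_le_mul_measure_univ_rpow hq ht.aemeasurable
    _ = (∫⁻ s, ∫⁻ t, k s t ^ q ∂lam ∂μ) * μ univ ^ (q - 1) := by
        rw [lintegral_mul_const' _ _ hμ_pow, lintegral_lintegral_swap (hk_swap.pow_const q)]
    _ ≤ C * μ univ * μ univ ^ (q - 1) := by
        gcongr
        exact (lintegral_mono_ae hC).trans_eq (lintegral_const C)

theorem memLp_of_integrable_of_bound {g : S → E} (hp : 1 ≤ p) (hp_top : p ≠ ∞)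
    (hg : Integrable g μ) {C : ℝ} (hC : ∀ᵐ s ∂μ, ‖g s‖ ≤ C) : MemLp g p μ := by
  have hq : 1 ≤ p.toReal := by
    simpa only [ENNReal.toReal_one] using ENNReal.toReal_mono hp_top hp
  rw [← integrable_norm_rpow_iff hg.1 (one_pos.trans_le hp).ne' hp_top]
  refine (hg.norm.const_mul (C ^ (p.toReal - 1))).mono'
    (hg.1.norm.aemeasurable.pow_const _).aestronglyMeasurable ?_
  filter_upwards [hC] with s hs
  calc ‖‖g s‖ ^ p.toReal‖ = ‖g s‖ ^ (p.toReal - 1) * ‖g s‖ ^ (1 : ℝ) := by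
        rw [Real.norm_of_nonneg (by positivity),
          ← Real.rpow_add_of_nonneg (norm_nonneg _) (by linarith) zero_le_one, sub_add_cancel]
    _ ≤ C ^ (p.toReal - 1) * ‖g s‖ := by
        rw [Real.rpow_one]
        gcongr

variable [NormedSpace ℝ E]

theorem memLp_integral_smul [SFinite μ] [SFinite lam] (hp : 1 ≤ p) (hp_top : p ≠ ∞)
    {a : S → ℝ} (ha : Integrable a μ)
    {K : S → T → E} (hK : AEStronglyMeasurable (uncurry K) (μ.prod lam)) {C : ℝ≥0}
    (hC : ∀ᵐ s ∂μ, a s ≠ 0 → eLpNorm (K s) p lam ≤ C) :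
    MemLp (fun t => ∫ s, a s • K s t ∂μ) p lam := by
  have hp₀ : p ≠ 0 := (one_pos.trans_le hp).ne'
  have hq : 1 ≤ p.toReal := by
    simpa only [ENNReal.toReal_one] using ENNReal.toReal_mono hp_top hp
  let m := μ.withDensity fun s => ‖a s‖ₑ
  have hm_ac : m ≪ μ := withDensity_absolutelyContinuous _ _
  have : IsFiniteMeasure m := isFiniteMeasure_withDensity ha.2.ne
  refine ⟨(ha.1.comp_snd.smul hK.prod_swap).integral_prod_right', ?_⟩
  rw [eLpNorm_lt_top_iff_lintegral_rpow_enorm_lt_top hp₀ hp_top]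
  have hbound : ∀ᵐ t ∂lam, ‖∫ s, a s • K s t ∂μ‖ₑ ≤ ∫⁻ s, ‖K s t‖ₑ ∂m := by
    filter_upwards [hK.prod_swap.prodMk_left] with t ht
    have ht : AEStronglyMeasurable (fun s => K s t) μ := ht
    calc ‖∫ s, a s • K s t ∂μ‖ₑ ≤ ∫⁻ s, ‖a s • K s t‖ₑ ∂μ := enorm_integral_le_lintegral_enorm _
      _ = ∫⁻ s, ‖K s t‖ₑ ∂m := by
        rw [lintegral_withDensity_eq_lintegral_mul₀ ha.1.enorm ht.enorm]
        simp only [enorm_smul, Pi.mul_apply]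
  have hpow : ∀ᵐ s ∂m, ∫⁻ t, ‖K s t‖ₑ ^ p.toReal ∂lam ≤ (C : ℝ≥0∞) ^ p.toReal := by
    refine (ae_withDensity_iff' ha.1.enorm).2 (hC.mono fun s hs has => ?_)
    replace hs := hs (enorm_ne_zero.1 has)
    rw [eLpNorm_eq_lintegral_rpow_enorm_toReal hp₀ hp_top, one_div] at hs
    exact (ENNReal.rpow_inv_le_iff (by positivity)).1 hs
  calc ∫⁻ t, ‖∫ s, a s • K s t ∂μ‖ₑ ^ p.toReal ∂lam
      ≤ ∫⁻ t, (∫⁻ s, ‖K s t‖ₑ ∂m) ^ p.toReal ∂lam := by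
        refine lintegral_mono_ae (hbound.mono fun t ht => ?_)
        gcongr
    _ ≤ (C : ℝ≥0∞) ^ p.toReal * m univ * m univ ^ (p.toReal - 1) :=
        lintegral_rpow_lintegral_le hq
          (hK.mono_ac (hm_ac.prod Measure.AbsolutelyContinuous.rfl)).enorm hpow
    _ < ∞ := by finiteness

end Lp

section Young

variable {G E : Type*} [AddGroup G] [MeasurableSpace G] [MeasurableAdd₂ G]
  [NormedAddCommGroup E] [NormedSpace ℝ E] {lam : Measure G} [SFinite lam]
  [lam.IsAddRightInvariant] {p : ℝ≥0∞} {h : G → E}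

theorem memLp_convolution_of_aestronglyMeasurable_prod {μ : Measure G} [SFinite μ] (hp : 1 ≤ p)
    (hp_top : p ≠ ∞) {a : G → ℝ} (ha : Integrable a μ) (hh : MemLp h p lam)
    (hh_prod : AEStronglyMeasurable (fun z : G × G => h (z.2 - z.1)) (μ.prod lam)) :
    MemLp (a ⋆[lsmul ℝ ℝ, μ] h) p lam :=
  memLp_integral_smul hp hp_top ha hh_prod (C := (eLpNorm h p lam).toNNReal)
    (ae_of_all _ fun s _ => by
      rw [ENNReal.coe_toNNReal hh.2.ne]
      exact (eLpNorm_comp_measurePreserving hh.1 (measurePreserving_sub_right lam s)).le)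

variable [MeasurableNeg G]

theorem memLp_convolution_of_stronglyMeasurable {μ : Measure G} [SFinite μ] (hp : 1 ≤ p)
    (hp_top : p ≠ ∞) {a : G → ℝ} (ha : Integrable a μ) (hh_meas : StronglyMeasurable h)
    (hh : MemLp h p lam) : MemLp (a ⋆[lsmul ℝ ℝ, μ] h) p lam :=
  memLp_convolution_of_aestronglyMeasurable_prod hp hp_top ha hh
    (hh_meas.comp_measurable (by fun_prop)).aestronglyMeasurable

theorem memLp_convolution (hp : 1 ≤ p) (hp_top : p ≠ ∞) {a : G → ℝ} (ha : Integrable a lam)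
    (hh : MemLp h p lam) : MemLp (a ⋆[lsmul ℝ ℝ, lam] h) p lam :=
  memLp_convolution_of_aestronglyMeasurable_prod hp hp_top ha hh
    (hh.1.comp_quasiMeasurePreserving
      (quasiMeasurePreserving_sub_of_right_invariant lam lam)).prod_swap

end Young

section Baire

variable {X : Type*} [TopologicalSpace X]

theorem lowerSemicontinuous_eLpNorm {S E : Type*} [MeasurableSpace S] [NormedAddCommGroup E]
    [SequentialSpace X] {μ : Measure S} {p : ℝ≥0∞} {K : X → S → E}
    (hK : ∀ x, AEStronglyMeasurable (K x) μ) (hcont : ∀ s, Continuous fun x => K x s) :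
    LowerSemicontinuous fun x => eLpNorm (K x) p μ := by
  refine lowerSemicontinuous_iff_isClosed_preimage.2 fun c => IsSeqClosed.isClosed ?_
  intro x x₀ hx hlim
  calc eLpNorm (K x₀) p μ ≤ liminf (fun n => eLpNorm (K (x n)) p μ) atTop :=
        Lp.eLpNorm_lim_le_liminf_eLpNorm (fun n => hK (x n)) _
          (ae_of_all _ fun s => ((hcont s).tendsto x₀).comp hlim)
    _ ≤ c := liminf_le_of_frequently_le' (Frequently.of_forall hx)

theorem exists_isOpen_forall_le_of_lowerSemicontinuous [BaireSpace X] {φ : X → ℝ≥0∞}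
    (hφ : LowerSemicontinuous φ) {s : Set X} (hs : IsOpen s) (hne : s.Nonempty)
    (hfin : ∀ x ∈ s, φ x ≠ ∞) :
    ∃ U ⊆ s, IsOpen U ∧ U.Nonempty ∧ ∃ n : ℕ, ∀ x ∈ U, φ x ≤ n := by
  let T (n : ℕ) : Set X := φ ⁻¹' Iic (n : ℝ≥0∞) ∪ sᶜ
  have hT_closed (n : ℕ) : IsClosed (T n) :=
    (lowerSemicontinuous_iff_isClosed_preimage.1 hφ n).union hs.isClosed_compl
  have hT_cover : ⋃ n, T n = univ := by
    refine eq_univ_of_forall fun x => mem_iUnion.2 ?_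
    by_cases hx : x ∈ s
    · obtain ⟨n, hn⟩ := ENNReal.exists_nat_gt (hfin x hx)
      exact ⟨n, Or.inl hn.le⟩
    · exact ⟨0, Or.inr hx⟩
  obtain ⟨x, hxs, hxT⟩ :=
    (dense_iUnion_interior_of_closed hT_closed hT_cover).inter_open_nonempty s hs hne
  obtain ⟨n, hxn⟩ := mem_iUnion.1 hxT
  refine ⟨s ∩ interior (T n), inter_subset_left, hs.inter isOpen_interior, ⟨x, hxs, hxn⟩, n, ?_⟩
  rintro u ⟨hus, huT⟩
  exact (interior_subset huT).resolve_right (not_not_intro hus)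

end Baire

section Causal

variable {E : Type*} [NormedAddCommGroup E]

/-- A function on `ℝ` that vanishes on the negative half-line; functions on `[0, ∞)` are treated
as causal functions by extending them by zero. -/
def Causal (f : ℝ → E) : Prop :=
  ∀ t < 0, f t = 0

theorem Causal.indicator_Ici (f : ℝ → E) : Causal ((Ici 0).indicator f) := fun _ ht =>
  indicator_of_notMem (notMem_Ici.2 ht) f

theorem Causal.sub {f g : ℝ → E} (hf : Causal f) (hg : Causal g) : Causal (f - g) := fun t ht => by
  rw [Pi.sub_apply, hf t ht, hg t ht, sub_zero]

theorem Causal.integrableOn_Iic {μ : Measure ℝ} {f : ℝ → E} (hf : Causal f)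
    (hf_loc : LocallyIntegrable f μ) (t : ℝ) : IntegrableOn f (Iic t) μ := by
  have hneg : IntegrableOn f (Iio 0) μ :=
    integrableOn_zero.congr_fun (fun s hs => (hf s hs).symm) measurableSet_Iio
  refine (hneg.union (hf_loc.integrableOn_isCompact (isCompact_Icc (a := 0) (b := t)))).mono_set ?_
  intro s hs
  exact (lt_or_ge s 0).imp id fun h => ⟨h, hs⟩

theorem Causal.integrable_indicator_Iic {μ : Measure ℝ} {f : ℝ → E} (hf : Causal f)
    (hf_loc : LocallyIntegrable f μ) (t : ℝ) : Integrable ((Iic t).indicator f) μ :=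
  (integrable_indicator_iff measurableSet_Iic).2 (hf.integrableOn_Iic hf_loc t)

variable [NormedSpace ℝ E]

theorem Causal.convolution {μ : Measure ℝ} {a : ℝ → ℝ} {f : ℝ → E} (ha : Causal a)
    (hf : Causal f) : Causal (a ⋆[lsmul ℝ ℝ, μ] f) := by
  intro t ht
  rw [convolution_lsmul]
  refine integral_eq_zero_of_ae (ae_of_all _ fun s => ?_)
  rcases lt_or_ge s 0 with hs | hs
  · simp only [ha s hs, zero_smul, Pi.zero_apply]
  · simp only [hf (t - s) (by linarith), smul_zero, Pi.zero_apply]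

/-- The indefinite integral of `f` that vanishes at `0`. -/
noncomputable def primitive (f : ℝ → E) (t : ℝ) : E :=
  ∫ s in (0 : ℝ)..t, f s

/-- The Heaviside step function. Convolving with it over the Lebesgue measure gives the primitive
of a causal function, and convolving with it over a measure `μ` gives the convolution with the
restriction of `μ` to `[0, ∞)`. -/
noncomputable def heaviside : ℝ → ℝ :=
  (Ici 0).indicator 1

theorem causal_heaviside : Causal heaviside :=
  Causal.indicator_Ici 1

theorem norm_heaviside_le (t : ℝ) : ‖heaviside t‖ ≤ 1 :=
  (norm_indicator_le_norm_self _ _).trans_eq norm_one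

theorem stronglyMeasurable_heaviside : StronglyMeasurable heaviside :=
  stronglyMeasurable_one.indicator measurableSet_Ici

theorem locallyIntegrable_heaviside {μ : Measure ℝ} [IsLocallyFiniteMeasure μ] :
    LocallyIntegrable heaviside μ :=
  (locallyIntegrable_const 1).indicator measurableSet_Ici

theorem heaviside_convolution_apply {μ : Measure ℝ} (f : ℝ → E) (t : ℝ) :
    (heaviside ⋆[lsmul ℝ ℝ, μ] f) t = ∫ s in Ici 0, f (t - s) ∂μ := by
  rw [convolution_lsmul, ← integral_indicator measurableSet_Ici]
  congr 1 with s
  by_cases hs : s ∈ Ici 0 <;> simp [heaviside, hs]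

theorem Causal.heaviside_convolution {f : ℝ → E} (hf : Causal f) :
    heaviside ⋆ f = primitive f := by
  ext t
  calc (heaviside ⋆ f) t = ∫ s in Iic t, f s := by
        rw [heaviside_convolution_apply, ← integral_indicator measurableSet_Ici,
          ← integral_indicator measurableSet_Iic, ← integral_sub_left_eq_self _ _ t]
        congr 1 with s
        simp [indicator]
    _ = primitive f t := ?_
  rcases le_total t 0 with ht | ht
  · rw [primitive, intervalIntegral.integral_of_ge ht, integral_Iic_eq_integral_Iio,
      integral_Ioc_eq_integral_Ioo, setIntegral_eq_zero_of_forall_eq_zero fun s (hs : s ∈ Iio t) =>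
        hf s (lt_of_lt_of_le hs ht),
      setIntegral_eq_zero_of_forall_eq_zero fun s (hs : s ∈ Ioo t 0) => hf s hs.2, neg_zero]
  · rw [primitive, intervalIntegral.integral_of_le ht, ← integral_Icc_eq_integral_Ioc]
    exact setIntegral_eq_of_subset_of_forall_sdiff_eq_zero measurableSet_Iic
      Icc_subset_Iic_self fun s hs => hf s (not_le.1 fun h => hs.2 ⟨h, hs.1⟩)

theorem Causal.primitive {f : ℝ → E} (hf : Causal f) : Causal (primitive f) :=
  hf.heaviside_convolution ▸ causal_heaviside.convolution hf

theorem continuous_primitive {f : ℝ → E} (hf : LocallyIntegrable f) : Continuous (primitive f) :=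
  intervalIntegral.continuous_primitive
    (fun _ _ => (hf.integrableOn_isCompact isCompact_uIcc).intervalIntegrable) 0

theorem primitive_sub_primitive {f : ℝ → E} (hf : LocallyIntegrable f) (s t : ℝ) :
    primitive f t - primitive f s = ∫ u in s..t, f u :=
  intervalIntegral.integral_interval_sub_left
    (hf.integrableOn_isCompact isCompact_uIcc).intervalIntegrable
    (hf.integrableOn_isCompact isCompact_uIcc).intervalIntegrable

theorem norm_primitive_le {f : ℝ → E} (hf : Integrable f) (t : ℝ) :
    ‖primitive f t‖ ≤ ∫ s, ‖f s‖ :=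
  intervalIntegral.norm_integral_le_integral_norm_uIoc.trans
    (setIntegral_le_integral hf.norm (ae_of_all _ fun _ => norm_nonneg _))

end Causal

section CausalConvolution

variable {E : Type*} [NormedAddCommGroup E] [NormedSpace ℝ E]

theorem stronglyMeasurable_convolution {μ : Measure ℝ} {a : ℝ → ℝ} {f : ℝ → E} [SFinite μ]
    (ha : StronglyMeasurable a) (hf : StronglyMeasurable f) :
    StronglyMeasurable (a ⋆[lsmul ℝ ℝ, μ] f) := by
  refine StronglyMeasurable.integral_prod_right ?_
  exact (ha.comp_measurable measurable_snd).smul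
    (hf.comp_measurable (measurable_fst.sub measurable_snd))

theorem stronglyMeasurable_convolution_of_aestronglyMeasurable {a : ℝ → ℝ} {f : ℝ → E}
    (ha : StronglyMeasurable a) (hf : AEStronglyMeasurable f) : StronglyMeasurable (a ⋆ f) := by
  rw [convolution_congr _ EventuallyEq.rfl hf.ae_eq_mk]
  exact stronglyMeasurable_convolution ha hf.stronglyMeasurable_mk

variable {a : ℝ → ℝ} {f : ℝ → E} {C : ℝ}

theorem Causal.convolutionExists (ha : Causal a) (ha_meas : StronglyMeasurable a)
    (ha_bdd : ∀ t, ‖a t‖ ≤ C) (hf : Causal f) (hf_loc : LocallyIntegrable f) :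
    ConvolutionExists a f (lsmul ℝ ℝ) := by
  intro t
  rw [convolutionExistsAt_iff_integrable_swap]
  have ha_comp : AEStronglyMeasurable (fun s => a (t - s)) :=
    (ha_meas.comp_measurable (by fun_prop)).aestronglyMeasurable
  refine ((hf.integrable_indicator_Iic hf_loc t).bdd_smul C ha_comp
    (ae_of_all _ fun s => ha_bdd (t - s))).congr (ae_of_all _ fun s => ?_)
  by_cases hs : s ≤ t
  · simp [hs]
  · simp [hs, ha (t - s) (by linarith)]

theorem Causal.convolution_assoc [CompleteSpace E] {μ : Measure ℝ} [IsLocallyFiniteMeasure μ]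
    {w : ℝ → ℝ} (hw : Causal w) (hw_loc : LocallyIntegrable w μ) (ha : Causal a)
    (ha_meas : StronglyMeasurable a) (ha_bdd : ∀ t, ‖a t‖ ≤ C) (hf : Causal f)
    (hf_loc : LocallyIntegrable f) :
    (w ⋆[lsmul ℝ ℝ, μ] a) ⋆ f = w ⋆[lsmul ℝ ℝ, μ] (a ⋆ f) := by
  ext t
  -- The integrand is supported in `0 ≤ s ≤ u ≤ t`, so `w` and `f` may be truncated.
  have htrunc (u s : ℝ) : a (u - s) • (Iic t).indicator w s • (Iic t).indicator f (t - u) =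
      w s • a (u - s) • f (t - u) := by
    rcases lt_or_ge s 0 with hs | hs
    · simp [indicator, hw s hs]
    rcases lt_or_ge u s with hus | hus
    · simp [ha (u - s) (by linarith)]
    rcases lt_or_ge t u with hut | hut
    · simp [indicator, hf (t - u) (by linarith)]
    · simp [indicator, hs.trans hus, hus.trans hut, smul_comm (a (u - s))]
  have hint : Integrable (uncurry fun u s => w s • a (u - s) • f (t - u)) (volume.prod μ) := by
    have hprod := (hw.integrable_indicator_Iic hw_loc t).smul_prod
      ((hf.integrable_indicator_Iic hf_loc t).comp_sub_left t)
    refine (hprod.swap.bdd_smul C (ha_meas.comp_measurable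
      (measurable_fst.sub measurable_snd)).aestronglyMeasurable
      (ae_of_all _ fun z => ha_bdd _)).congr (ae_of_all _ fun z => htrunc z.1 z.2)
  calc ((w ⋆[lsmul ℝ ℝ, μ] a) ⋆ f) t
      = ∫ u, ∫ s, w s • a (u - s) • f (t - u) ∂μ := by
        simp only [convolution_lsmul, smul_eq_mul, ← integral_smul_const, mul_smul]
    _ = ∫ s, (∫ u, w s • a (u - s) • f (t - u)) ∂μ := integral_integral_swap hint
    _ = ∫ s, w s • (∫ u, a (u - s) • f (t - s - (u - s))) ∂μ := by
        simp only [integral_smul, sub_sub_sub_cancel_right]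
    _ = (w ⋆[lsmul ℝ ℝ, μ] (a ⋆ f)) t := by
        simp only [convolution_lsmul]
        congr 1 with s
        rw [integral_sub_right_eq_self (fun u => a u • f (t - s - u)) s]

theorem Causal.primitive_convolution [CompleteSpace E] (ha : Causal a)
    (ha_meas : StronglyMeasurable a) (ha_bdd : ∀ t, ‖a t‖ ≤ C) (hf : Causal f)
    (hf_loc : LocallyIntegrable f) :
    Volterra.primitive (a ⋆ f) = Volterra.primitive a ⋆ f := by
  rw [← (ha.convolution hf).heaviside_convolution, ← ha.heaviside_convolution,
    causal_heaviside.convolution_assoc locallyIntegrable_heaviside ha ha_meas ha_bdd hf hf_loc]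

theorem Causal.convolution_primitive [CompleteSpace E] (ha : Causal a)
    (ha_loc : LocallyIntegrable a) (hf : Causal f) (hf_loc : LocallyIntegrable f) :
    a ⋆ Volterra.primitive f = Volterra.primitive a ⋆ f := by
  have hcomm : a ⋆ heaviside = heaviside ⋆ a := by
    ext t
    simp only [convolution_lsmul, convolution_lsmul_swap (f := a), smul_eq_mul, mul_comm]
  rw [← hf.heaviside_convolution, ← ha.heaviside_convolution, ← hcomm,
    ha.convolution_assoc ha_loc causal_heaviside stronglyMeasurable_heaviside norm_heaviside_le
      hf hf_loc]

end CausalConvolution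

section SignedConvolution

variable {E : Type*} [NormedAddCommGroup E] [NormedSpace ℝ E] {ν : SignedMeasure ℝ} {p : ℝ≥0∞}

/-- The convolution `t ↦ ∫_{[0,∞)} g (t - s) dν(s)`, defined through the Jordan decomposition
of `ν`. For causal `g` it is the convolution term of the Volterra equation. -/
noncomputable def signedConvolution (ν : SignedMeasure ℝ) (g : ℝ → E) : ℝ → E :=
  heaviside ⋆[lsmul ℝ ℝ, ν.toJordanDecomposition.posPart] g -
    heaviside ⋆[lsmul ℝ ℝ, ν.toJordanDecomposition.negPart] g

theorem Causal.signedConvolution {g : ℝ → E} (hg : Causal g) : Causal (signedConvolution ν g) :=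
  (causal_heaviside.convolution hg).sub (causal_heaviside.convolution hg)

theorem stronglyMeasurable_signedConvolution {g : ℝ → E} (hg : StronglyMeasurable g) :
    StronglyMeasurable (signedConvolution ν g) :=
  (stronglyMeasurable_convolution stronglyMeasurable_heaviside hg).sub
    (stronglyMeasurable_convolution stronglyMeasurable_heaviside hg)

theorem integrable_heaviside {μ : Measure ℝ} [IsFiniteMeasure μ] : Integrable heaviside μ :=
  (integrable_const 1).indicator measurableSet_Ici

theorem memLp_signedConvolution (hp : 1 ≤ p) (hp_top : p ≠ ∞) {g : ℝ → E}
    (hg_meas : StronglyMeasurable g) (hg : MemLp g p) : MemLp (signedConvolution ν g) p :=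
  (memLp_convolution_of_stronglyMeasurable hp hp_top integrable_heaviside hg_meas hg).sub
    (memLp_convolution_of_stronglyMeasurable hp hp_top integrable_heaviside hg_meas hg)

theorem norm_heaviside_convolution_le {μ : Measure ℝ} [IsFiniteMeasure μ] {g : ℝ → E} {C : ℝ}
    (hg : ∀ t, ‖g t‖ ≤ C) (t : ℝ) :
    ‖(heaviside ⋆[lsmul ℝ ℝ, μ] g) t‖ ≤ C * μ.real (Ici 0) := by
  rw [heaviside_convolution_apply]
  exact norm_setIntegral_le_of_norm_le_const (measure_lt_top μ _) fun s _ => hg (t - s)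

theorem exists_norm_signedConvolution_le {g : ℝ → E} {C : ℝ} (hg : ∀ t, ‖g t‖ ≤ C) :
    ∃ D, ∀ t, ‖signedConvolution ν g t‖ ≤ D :=
  ⟨_, fun t => (norm_sub_le _ _).trans
    (add_le_add (norm_heaviside_convolution_le hg t) (norm_heaviside_convolution_le hg t))⟩

theorem signedConvolution_convolution [CompleteSpace E] {a : ℝ → ℝ} {f : ℝ → E} {C : ℝ}
    (ha : Causal a) (ha_meas : StronglyMeasurable a) (ha_bdd : ∀ t, ‖a t‖ ≤ C) (hf : Causal f)
    (hf_loc : LocallyIntegrable f) :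
    signedConvolution ν a ⋆ f = signedConvolution ν (a ⋆ f) := by
  have hexists (μ : Measure ℝ) [IsFiniteMeasure μ] :
      ConvolutionExists (heaviside ⋆[lsmul ℝ ℝ, μ] a) f (lsmul ℝ ℝ) :=
    (causal_heaviside.convolution ha).convolutionExists
      (stronglyMeasurable_convolution stronglyMeasurable_heaviside ha_meas)
      (norm_heaviside_convolution_le ha_bdd) hf hf_loc
  have hassoc (μ : Measure ℝ) [IsFiniteMeasure μ] :
      (heaviside ⋆[lsmul ℝ ℝ, μ] a) ⋆ f = heaviside ⋆[lsmul ℝ ℝ, μ] (a ⋆ f) :=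
    causal_heaviside.convolution_assoc locallyIntegrable_heaviside ha ha_meas ha_bdd hf hf_loc
  ext t
  rw [signedConvolution, signedConvolution, ← hassoc, ← hassoc, Pi.sub_apply,
    convolution_lsmul (f := _ - _)]
  simp only [Pi.sub_apply, sub_smul]
  exact integral_sub (hexists _ t) (hexists _ t)

end SignedConvolution

section Resolvent

variable {E : Type*} [NormedAddCommGroup E] [NormedSpace ℝ E]
  {ν : SignedMeasure ℝ} {r : ℝ → ℝ} {f : ℝ → E} {p : ℝ≥0∞}

/-- The function `r`, extended by zero to `(-∞, 0)`, is an integrable differential resolvent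
of `ν`; the equation `r' = ν * r`, `r 0 = 1` is stated in its integrated form. -/
structure IsIntegrableResolvent (ν : SignedMeasure ℝ) (r : ℝ → ℝ) : Prop where
  causal : Causal r
  stronglyMeasurable : StronglyMeasurable r
  integrable : Integrable r
  eq_heaviside_add_primitive : r = heaviside + primitive (signedConvolution ν r)

namespace IsIntegrableResolvent

theorem integrable_signedConvolution (hr : IsIntegrableResolvent ν r) :
    Integrable (signedConvolution ν r) :=
  memLp_one_iff_integrable.1 (memLp_signedConvolution le_rfl ENNReal.one_ne_top
    hr.stronglyMeasurable (memLp_one_iff_integrable.2 hr.integrable))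

theorem exists_norm_le (hr : IsIntegrableResolvent ν r) : ∃ C, ∀ t, ‖r t‖ ≤ C := by
  refine ⟨1 + ∫ s, ‖signedConvolution ν r s‖, fun t => ?_⟩
  calc ‖r t‖ = ‖heaviside t + primitive (signedConvolution ν r) t‖ :=
        congrArg norm (congrFun hr.eq_heaviside_add_primitive t)
    _ ≤ 1 + ∫ s, ‖signedConvolution ν r s‖ :=
        norm_add_le_of_le (norm_heaviside_le t)
          (norm_primitive_le hr.integrable_signedConvolution t)

theorem memLp (hr : IsIntegrableResolvent ν r) (hp : 1 ≤ p) (hp_top : p ≠ ∞) : MemLp r p :=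
  let ⟨_, hC⟩ := hr.exists_norm_le
  memLp_of_integrable_of_bound hp hp_top hr.integrable (ae_of_all _ hC)

theorem convolution_eq_primitive_add (hr : IsIntegrableResolvent ν r) (hf : Causal f)
    (hf_loc : LocallyIntegrable f) :
    r ⋆ f = primitive f + primitive (signedConvolution ν r) ⋆ f := by
  have hρ := hr.integrable_signedConvolution
  conv_lhs => rw [hr.eq_heaviside_add_primitive]
  rw [← hf.heaviside_convolution]
  exact (causal_heaviside.convolutionExists stronglyMeasurable_heaviside norm_heaviside_le
    hf hf_loc).add_distrib (hr.causal.signedConvolution.primitive.convolutionExists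
      (continuous_primitive hρ.locallyIntegrable).stronglyMeasurable (norm_primitive_le hρ)
      hf hf_loc)

variable [CompleteSpace E]

theorem convolution_eq_primitive_add_convolution_primitive (hr : IsIntegrableResolvent ν r)
    (hf : Causal f) (hf_loc : LocallyIntegrable f) :
    r ⋆ f = primitive f + signedConvolution ν r ⋆ primitive f := by
  rw [hr.convolution_eq_primitive_add hf hf_loc, hr.causal.signedConvolution.convolution_primitive
    hr.integrable_signedConvolution.locallyIntegrable hf hf_loc]

theorem convolution_eq_primitive_add_primitive_signedConvolution (hr : IsIntegrableResolvent ν r)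
    (hf : Causal f) (hf_loc : LocallyIntegrable f) :
    r ⋆ f = primitive f + primitive (signedConvolution ν (r ⋆ f)) := by
  obtain ⟨C, hC⟩ := hr.exists_norm_le
  obtain ⟨D, hD⟩ := exists_norm_signedConvolution_le (ν := ν) hC
  conv_lhs => rw [hr.convolution_eq_primitive_add hf hf_loc]
  rw [← hr.causal.signedConvolution.primitive_convolution
      (stronglyMeasurable_signedConvolution hr.stronglyMeasurable) hD hf hf_loc,
    signedConvolution_convolution hr.causal hr.stronglyMeasurable hC hf hf_loc]

end IsIntegrableResolvent

end Resolvent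

section Averaging

variable {E : Type*} [NormedAddCommGroup E] {p : ℝ≥0∞}

theorem exists_Ioc_eLpNorm_sub_translate_le {F : ℝ → E} (hF : Continuous F)
    (hF_memLp : ∀ θ ∈ Ioc (0 : ℝ) 1, MemLp (fun t => F t - F (t - θ)) p) :
    ∃ a b : ℝ, 0 ≤ a ∧ a < b ∧ b ≤ 1 ∧
      ∃ C : ℝ≥0, ∀ θ ∈ Ioc a b, eLpNorm (fun t => F t - F (t - θ)) p ≤ C := by
  have hlsc : LowerSemicontinuous fun θ => eLpNorm (fun t => F t - F (t - θ)) p :=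
    lowerSemicontinuous_eLpNorm
      (fun θ => Continuous.aestronglyMeasurable (by fun_prop)) fun t => by fun_prop
  obtain ⟨U, hU_sub, hU_open, ⟨θ, hθ⟩, n, hn⟩ :=
    exists_isOpen_forall_le_of_lowerSemicontinuous hlsc isOpen_Ioo (nonempty_Ioo.2 one_pos)
      fun θ hθ => (hF_memLp θ (Ioo_subset_Ioc_self hθ)).2.ne
  obtain ⟨b, hb, hU⟩ := mem_nhdsGE_iff_exists_Icc_subset.1
    (mem_nhdsWithin_of_mem_nhds (hU_open.mem_nhds hθ))
  exact ⟨θ, b, (hU_sub hθ).1.le, hb, (hU_sub (hU ⟨hb.le, le_rfl⟩)).2.le, n,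
    fun s hs => hn s (hU (Ioc_subset_Icc_self hs))⟩

variable [NormedSpace ℝ E]

theorem memLp_sub_convolution [CompleteSpace E] (hp : 1 ≤ p) (hp_top : p ≠ ∞) {β : ℝ → ℝ}
    (hβ : Integrable β) (hβ_one : ∫ θ, β θ = 1) {F : ℝ → E} (hF : Continuous F)
    (hF_exists : ConvolutionExists β F (lsmul ℝ ℝ)) {C : ℝ≥0}
    (hC : ∀ θ, β θ ≠ 0 → eLpNorm (fun t => F t - F (t - θ)) p ≤ C) :
    MemLp (F - β ⋆ F) p := by
  have hsub : F - β ⋆ F = fun t => ∫ θ, β θ • (F t - F (t - θ)) := by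
    ext t
    have hint : Integrable fun θ => β θ • F (t - θ) := hF_exists t
    simp only [smul_sub]
    rw [integral_sub (hβ.smul_const _) hint, integral_smul_const, hβ_one, one_smul, Pi.sub_apply,
      convolution_lsmul]
  rw [hsub]
  exact memLp_integral_smul hp hp_top hβ
    (Continuous.aestronglyMeasurable (f := fun z : ℝ × ℝ => F z.2 - F (z.2 - z.1)) (by fun_prop))
    (ae_of_all _ hC)

/-- The density of the uniform distribution on `(a, b]`. Convolving with it replaces a function by
its sliding averages. -/
noncomputable def uniformDensity (a b : ℝ) : ℝ → ℝ :=
  (Ioc a b).indicator fun _ => (b - a)⁻¹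

variable {a b : ℝ}

theorem causal_uniformDensity (ha : 0 ≤ a) : Causal (uniformDensity a b) := fun _ ht =>
  indicator_of_notMem (fun h => ht.not_ge (ha.trans h.1.le)) _

theorem stronglyMeasurable_uniformDensity : StronglyMeasurable (uniformDensity a b) :=
  stronglyMeasurable_const.indicator measurableSet_Ioc

theorem norm_uniformDensity_le (t : ℝ) : ‖uniformDensity a b t‖ ≤ ‖(b - a)⁻¹‖ :=
  norm_indicator_le_norm_self _ t

theorem integrable_uniformDensity : Integrable (uniformDensity a b) :=
  (integrable_indicator_iff measurableSet_Ioc).2 (integrableOn_const measure_Ioc_lt_top.ne)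

theorem integral_uniformDensity (hab : a < b) : ∫ θ, uniformDensity a b θ = 1 := by
  rw [uniformDensity, integral_indicator measurableSet_Ioc, setIntegral_const, smul_eq_mul,
    Real.volume_real_Ioc_of_le hab.le, mul_inv_cancel₀ (sub_pos.2 hab).ne']

theorem uniformDensity_convolution_apply (hab : a ≤ b) (f : ℝ → E) (t : ℝ) :
    (uniformDensity a b ⋆ f) t = (b - a)⁻¹ • ∫ s in (t - b)..(t - a), f s := by
  have hind (s : ℝ) : uniformDensity a b s • f (t - s) =
      (Ioc a b).indicator (fun s => (b - a)⁻¹ • f (t - s)) s :=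
    (indicator_smul_apply_left (Ioc a b) (fun _ => (b - a)⁻¹) (fun s => f (t - s)) s).symm
  simp only [convolution_lsmul, hind]
  rw [integral_indicator measurableSet_Ioc, integral_smul, ← intervalIntegral.integral_of_le hab,
    intervalIntegral.integral_comp_sub_left]

theorem memLp_intervalIntegral_add (hp : 1 ≤ p) (hp_top : p ≠ ∞) {g : ℝ → E} (hg : MemLp g p)
    {θ : ℝ} (hθ : 0 < θ) : MemLp (fun t => ∫ s in t..t + θ, g s) p := by
  have hconv (t : ℝ) : ∫ s in t..t + θ, g s = θ • (uniformDensity (-θ) 0 ⋆ g) t := by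
    rw [uniformDensity_convolution_apply (by linarith), zero_sub, neg_neg, sub_zero, sub_neg_eq_add,
      smul_inv_smul₀ hθ.ne']
  simp only [hconv]
  exact (memLp_convolution hp hp_top integrable_uniformDensity hg).const_smul θ

theorem exists_memLp_memLp_primitive_sub [CompleteSpace E] (hp : 1 ≤ p) (hp_top : p ≠ ∞)
    {f : ℝ → E} (hf : Causal f) (hf_loc : LocallyIntegrable f)
    (hf_memLp : ∀ θ ∈ Ioc (0 : ℝ) 1, MemLp (fun t => ∫ s in t..t + θ, f s) p) :
    ∃ g, Causal g ∧ MemLp g p ∧ MemLp (primitive (f - g)) p := by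
  have hF := continuous_primitive hf_loc
  have hmemLp (c : ℝ) {θ : ℝ} (hθ : θ ∈ Ioc (0 : ℝ) 1) :
      MemLp (fun t => ∫ s in (t - c)..(t - c + θ), f s) p :=
    (hf_memLp θ hθ).comp_measurePreserving (measurePreserving_sub_right volume c)
  obtain ⟨a, b, ha, hab, hb, C, hC⟩ := exists_Ioc_eLpNorm_sub_translate_le hF (p := p)
    fun θ hθ => by
      simpa only [primitive_sub_primitive hf_loc, sub_add_cancel] using hmemLp θ hθ
  have hβ := causal_uniformDensity (b := b) ha
  have hβf : uniformDensity a b ⋆ f = fun t =>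
      (b - a)⁻¹ • ∫ s in (t - b)..(t - b + (b - a)), f s := by
    ext t
    rw [uniformDensity_convolution_apply hab.le, sub_add_sub_cancel]
  have hg : MemLp (uniformDensity a b ⋆ f) p :=
    hβf ▸ (hmemLp b ⟨by linarith, by linarith⟩).const_smul (b - a)⁻¹
  have hprim : primitive (f - uniformDensity a b ⋆ f) =
      primitive f - uniformDensity a b ⋆ primitive f := by
    rw [hβ.convolution_primitive integrable_uniformDensity.locallyIntegrable hf hf_loc,
      ← hβ.primitive_convolution stronglyMeasurable_uniformDensity norm_uniformDensity_le hf hf_loc]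
    ext t
    exact intervalIntegral.integral_sub
      (hf_loc.integrableOn_isCompact isCompact_uIcc).intervalIntegrable
      ((hg.locallyIntegrable hp).integrableOn_isCompact isCompact_uIcc).intervalIntegrable
  refine ⟨uniformDensity a b ⋆ f, hβ.convolution hf, hg, hprim ▸ ?_⟩
  exact memLp_sub_convolution hp hp_top integrable_uniformDensity (integral_uniformDensity hab) hF
    (hβ.convolutionExists stronglyMeasurable_uniformDensity norm_uniformDensity_le hf.primitive
      hF.locallyIntegrable)
    fun θ hθ => hC θ (support_indicator_subset hθ)

end Averaging

section Main

variable {E : Type*} [NormedAddCommGroup E] [NormedSpace ℝ E] [CompleteSpace E]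
  {ν : SignedMeasure ℝ} {r : ℝ → ℝ} {f : ℝ → E} {p : ℝ≥0∞}

namespace IsIntegrableResolvent

theorem memLp_intervalIntegral_add_of_memLp_convolution (hr : IsIntegrableResolvent ν r)
    (hp : 1 ≤ p) (hp_top : p ≠ ∞) (hf : Causal f) (hf_loc : LocallyIntegrable f)
    (hy : MemLp (r ⋆ f) p) {θ : ℝ} (hθ : 0 < θ) :
    MemLp (fun t => ∫ s in t..t + θ, f s) p := by
  have hz : MemLp (signedConvolution ν (r ⋆ f)) p :=
    memLp_signedConvolution hp hp_top (stronglyMeasurable_convolution_of_aestronglyMeasurable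
      hr.stronglyMeasurable hf_loc.aestronglyMeasurable) hy
  have hyt (t : ℝ) : (r ⋆ f) t = primitive f t + primitive (signedConvolution ν (r ⋆ f)) t :=
    congrFun (hr.convolution_eq_primitive_add_primitive_signedConvolution hf hf_loc) t
  have hincr (t : ℝ) : ∫ s in t..t + θ, f s =
      (r ⋆ f) (t + θ) - (r ⋆ f) t - ∫ s in t..t + θ, signedConvolution ν (r ⋆ f) s := by
    rw [← primitive_sub_primitive hf_loc, ← primitive_sub_primitive (hz.locallyIntegrable hp),
      hyt, hyt]
    abel
  simp only [hincr]
  exact ((hy.comp_measurePreserving (measurePreserving_add_right volume θ)).sub hy).sub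
    (memLp_intervalIntegral_add hp hp_top hz hθ)

theorem memLp_convolution_of_memLp_primitive (hr : IsIntegrableResolvent ν r)
    (hp : 1 ≤ p) (hp_top : p ≠ ∞) (hf : Causal f) (hf_loc : LocallyIntegrable f)
    (hF : MemLp (primitive f) p) : MemLp (r ⋆ f) p := by
  rw [hr.convolution_eq_primitive_add_convolution_primitive hf hf_loc]
  exact hF.add (memLp_convolution hp hp_top hr.integrable_signedConvolution hF)

theorem memLp_convolution_of_memLp_intervalIntegral_add (hr : IsIntegrableResolvent ν r)
    (hp : 1 ≤ p) (hp_top : p ≠ ∞) (hf : Causal f) (hf_loc : LocallyIntegrable f)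
    (hf_memLp : ∀ θ ∈ Ioc (0 : ℝ) 1, MemLp (fun t => ∫ s in t..t + θ, f s) p) :
    MemLp (r ⋆ f) p := by
  obtain ⟨g, hg, hg_memLp, hfg_memLp⟩ :=
    exists_memLp_memLp_primitive_sub hp hp_top hf hf_loc hf_memLp
  obtain ⟨C, hC⟩ := hr.exists_norm_le
  have hfg := hf.sub hg
  have hg_loc := hg_memLp.locallyIntegrable hp
  have hfg_loc := hf_loc.sub hg_loc
  have hsplit : r ⋆ f = r ⋆ g + r ⋆ (f - g) := by
    rw [← (hr.causal.convolutionExists hr.stronglyMeasurable hC hg hg_loc).distrib_add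
      (hr.causal.convolutionExists hr.stronglyMeasurable hC hfg hfg_loc), add_sub_cancel]
  rw [hsplit]
  exact (memLp_convolution hp hp_top hr.integrable hg_memLp).add
    (hr.memLp_convolution_of_memLp_primitive hp hp_top hfg hfg_loc hfg_memLp)

theorem memLp_intervalIntegral_add_iff (hr : IsIntegrableResolvent ν r)
    (hp : 1 ≤ p) (hp_top : p ≠ ∞) (hf : Causal f) (hf_loc : LocallyIntegrable f) :
    (∀ θ ∈ Ioc (0 : ℝ) 1, MemLp (fun t => ∫ s in t..t + θ, f s) p) ↔ MemLp (r ⋆ f) p :=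
  ⟨hr.memLp_convolution_of_memLp_intervalIntegral_add hp hp_top hf hf_loc, fun hy _ hθ =>
    hr.memLp_intervalIntegral_add_of_memLp_convolution hp hp_top hf hf_loc hy hθ.1⟩

end IsIntegrableResolvent

end Main

section Restriction

variable {E : Type*} [NormedAddCommGroup E]

theorem locallyIntegrable_indicator {X : Type*} [TopologicalSpace X] [MeasurableSpace X]
    [OpensMeasurableSpace X] {μ : Measure X} {s : Set X} (hs : IsClosed s) {f : X → E}
    (hf : LocallyIntegrableOn f s μ) : LocallyIntegrable (s.indicator f) μ := by
  intro x
  obtain ⟨U, hU, hfU⟩ := (locallyIntegrableOn_iff_locallyIntegrable_restrict hs).1 hf x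
  refine ⟨U, hU, (integrable_indicator_iff hs.measurableSet).2 ?_⟩
  rwa [IntegrableOn, Measure.restrict_comm hs.measurableSet]

theorem integrableOn_norm_rpow_iff_memLp_indicator {S : Type*} [MeasurableSpace S] {μ : Measure S}
    {p : ℝ} (hp : 0 < p) {s : Set S} (hs : MeasurableSet s) {g k : S → E} (hgk : EqOn g k s)
    (hk : AEStronglyMeasurable k μ) :
    IntegrableOn (fun t => ‖g t‖ ^ p) s μ ↔ MemLp (s.indicator k) (ENNReal.ofReal p) μ := by
  rw [integrableOn_congr_fun (fun t ht => congrArg (‖·‖ ^ p) (hgk ht)) hs,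
    memLp_indicator_iff_restrict hs, IntegrableOn,
    ← integrable_norm_rpow_iff hk.restrict (ENNReal.ofReal_pos.2 hp).ne' ENNReal.ofReal_ne_top,
    ENNReal.toReal_ofReal hp.le]

theorem memLp_indicator_Ici_iff {p : ℝ≥0∞} {k : ℝ → E} {a b : ℝ} (hk : Continuous k)
    (hka : ∀ t < a, k t = 0) : MemLp ((Ici b).indicator k) p ↔ MemLp k p := by
  refine ⟨fun hkb => ?_, MemLp.indicator measurableSet_Ici⟩
  have hk_Ico : MemLp ((Ico a b).indicator k) p := by
    obtain ⟨C, hC⟩ := isCompact_Icc.exists_bound_of_continuousOn (s := Icc a b) hk.continuousOn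
    rw [memLp_indicator_iff_restrict measurableSet_Ico]
    exact MemLp.of_bound hk.aestronglyMeasurable C
      ((ae_restrict_mem measurableSet_Ico).mono fun t ht => hC t (Ico_subset_Icc_self ht))
  have hsplit : (Ico a b ∪ Ici b).indicator k = k := indicator_eq_self.2 fun t ht =>
    (lt_or_ge t b).imp (fun htb => ⟨not_lt.1 fun hta => ht (hka t hta), htb⟩) id
  have hdisj : Disjoint (Ico a b) (Ici b) := disjoint_left.2 fun _ ht htb => ht.2.not_ge htb
  rw [← hsplit, indicator_union_of_disjoint hdisj]
  exact hk_Ico.add hkb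

theorem Causal.indicator_eq {f : ℝ → E} (hf : Causal f) : (Ici 0).indicator f = f :=
  indicator_eq_self.2 fun t ht => not_lt.1 fun h => ht (hf t h)

variable [NormedSpace ℝ E]

theorem intervalIntegral_indicator_Ici {a b : ℝ} (ha : 0 ≤ a) (hb : 0 ≤ b) (f : ℝ → E) :
    ∫ s in a..b, (Ici 0).indicator f s = ∫ s in a..b, f s :=
  intervalIntegral.integral_congr fun _ hs => indicator_of_mem ((le_inf ha hb).trans hs.1) f

theorem indicator_Ici_convolution_indicator_Ici (r : ℝ → ℝ) (f : ℝ → E) {t : ℝ} (ht : 0 ≤ t) :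
    ((Ici 0).indicator r ⋆ (Ici 0).indicator f) t = ∫ s in (0 : ℝ)..t, r (t - s) • f s := by
  rw [convolution_lsmul_swap, intervalIntegral.integral_of_le ht, ← integral_Icc_eq_integral_Ioc,
    ← integral_indicator measurableSet_Icc]
  congr 1 with s
  by_cases hs : 0 ≤ s <;> by_cases hst : s ≤ t <;> simp [hs, hst, indicator]

theorem heaviside_convolution_indicator_Ici {μ : Measure ℝ} (g : ℝ → E) (t : ℝ) :
    (heaviside ⋆[lsmul ℝ ℝ, μ] (Ici 0).indicator g) t = ∫ s in Icc 0 t, g (t - s) ∂μ := by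
  rw [heaviside_convolution_apply, ← Ici_inter_Iic, ← setIntegral_indicator measurableSet_Iic]
  congr 1 with s
  simp only [indicator, mem_Ici, mem_Iic, sub_nonneg]

theorem signedConvolution_indicator_Ici {ν : SignedMeasure ℝ} (g : ℝ → ℝ) (t : ℝ) :
    signedConvolution ν ((Ici 0).indicator g) t =
      signedSetIntegral ν (fun s => g (t - s)) (Icc 0 t) := by
  rw [signedConvolution, Pi.sub_apply, heaviside_convolution_indicator_Ici,
    heaviside_convolution_indicator_Ici, signedSetIntegral]

theorem isIntegrableResolvent_indicator_Ici {ν : SignedMeasure ℝ} {r r' : ℝ → ℝ}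
    (hr' : LocallyIntegrableOn r' (Ici 0)) (hr : ∀ t ≥ (0 : ℝ), r t = 1 + ∫ s in (0 : ℝ)..t, r' s)
    (hres : ∀ᵐ t ∂(volume.restrict (Ioi (0 : ℝ))),
      r' t = signedSetIntegral ν (fun s => r (t - s)) (Icc 0 t))
    (hr_int : IntegrableOn r (Ici 0)) :
    IsIntegrableResolvent ν ((Ici 0).indicator r) := by
  have hcausal := Causal.indicator_Ici r
  have hr'_ae : (Ici 0).indicator r' =ᵐ[volume] signedConvolution ν ((Ici 0).indicator r) := by
    filter_upwards [(ae_restrict_iff' measurableSet_Ioi).1 hres, Measure.ae_ne volume 0]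
      with t ht ht₀
    rcases ht₀.lt_or_gt with hneg | hpos
    · rw [hcausal.signedConvolution t hneg, Causal.indicator_Ici r' t hneg]
    · rw [signedConvolution_indicator_Ici, indicator_of_mem (mem_Ici.2 hpos.le), ht hpos]
  have hprim : primitive (signedConvolution ν ((Ici 0).indicator r)) =
      primitive ((Ici 0).indicator r') := by
    ext t
    exact intervalIntegral.integral_congr_ae (hr'_ae.symm.mono fun _ h _ => h)
  have heq : (Ici 0).indicator r =
      heaviside + primitive (signedConvolution ν ((Ici 0).indicator r)) := by
    rw [hprim]
    ext t
    rcases lt_or_ge t 0 with ht | ht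
    · rw [Pi.add_apply, hcausal t ht, causal_heaviside t ht,
        (Causal.indicator_Ici r').primitive t ht, add_zero]
    · rw [Pi.add_apply, primitive, intervalIntegral_indicator_Ici le_rfl ht, heaviside,
        indicator_of_mem (mem_Ici.2 ht), indicator_of_mem (mem_Ici.2 ht), hr t ht, Pi.one_apply]
  refine ⟨hcausal, ?_, (integrable_indicator_iff measurableSet_Ici).2 hr_int, heq⟩
  rw [heq, hprim]
  exact stronglyMeasurable_heaviside.add
    (continuous_primitive (locallyIntegrable_indicator isClosed_Ici hr')).stronglyMeasurable

theorem integrableOn_norm_intervalIntegral_rpow_iff {f : ℝ → E}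
    (hf : LocallyIntegrableOn f (Ici 0)) {p : ℝ} (hp : 0 < p) {θ : ℝ} (hθ : 0 ≤ θ) :
    IntegrableOn (fun t => ‖∫ s in t..t + θ, f s‖ ^ p) (Ici 0) ↔
      MemLp (fun t => ∫ s in t..t + θ, (Ici 0).indicator f s) (ENNReal.ofReal p) := by
  have hf_loc := locallyIntegrable_indicator isClosed_Ici hf
  have hF := continuous_primitive hf_loc
  have hF_neg := (Causal.indicator_Ici f).primitive
  have hincr_cont : Continuous fun t => ∫ s in t..t + θ, (Ici 0).indicator f s := by
    simp only [← primitive_sub_primitive hf_loc]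
    fun_prop
  have hincr_neg : ∀ t < -θ, ∫ s in t..t + θ, (Ici 0).indicator f s = 0 := fun t ht => by
    rw [← primitive_sub_primitive hf_loc, hF_neg t (by linarith), hF_neg (t + θ) (by linarith),
      sub_zero]
  rw [integrableOn_norm_rpow_iff_memLp_indicator hp measurableSet_Ici
    (fun t ht => (intervalIntegral_indicator_Ici ht (add_nonneg ht hθ) f).symm)
    hincr_cont.aestronglyMeasurable, memLp_indicator_Ici_iff hincr_cont hincr_neg]

theorem integrableOn_norm_solution_rpow_iff {ν : SignedMeasure ℝ} {r : ℝ → ℝ}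
    (hr : IsIntegrableResolvent ν ((Ici 0).indicator r)) {f : ℝ → E}
    (hf : LocallyIntegrableOn f (Ici 0)) {p : ℝ} (hp : 1 ≤ p) (ξ : E) :
    IntegrableOn (fun t => ‖r t • ξ + ∫ s in (0 : ℝ)..t, r (t - s) • f s‖ ^ p) (Ici 0) ↔
      MemLp ((Ici 0).indicator r ⋆ (Ici 0).indicator f) (ENNReal.ofReal p) := by
  have hξ : MemLp (fun t => (Ici 0).indicator r t • ξ) (ENNReal.ofReal p) :=
    (toSpanSingleton ℝ ξ).comp_memLp'
      (hr.memLp (ENNReal.one_le_ofReal.2 hp) ENNReal.ofReal_ne_top)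
  have hy_meas : StronglyMeasurable ((Ici 0).indicator r ⋆ (Ici 0).indicator f) :=
    stronglyMeasurable_convolution_of_aestronglyMeasurable hr.stronglyMeasurable
      (locallyIntegrable_indicator isClosed_Ici hf).aestronglyMeasurable
  have hx_causal : Causal ((fun t => (Ici 0).indicator r t • ξ) +
      (Ici 0).indicator r ⋆ (Ici 0).indicator f) := fun t ht => by
    rw [Pi.add_apply, hr.causal t ht, zero_smul,
      hr.causal.convolution (Causal.indicator_Ici f) t ht, add_zero]
  have hx_eq : EqOn (fun t => r t • ξ + ∫ s in (0 : ℝ)..t, r (t - s) • f s)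
      ((fun t => (Ici 0).indicator r t • ξ) + (Ici 0).indicator r ⋆ (Ici 0).indicator f)
      (Ici 0) := fun t ht => by
    rw [Pi.add_apply, indicator_Ici_convolution_indicator_Ici r f ht, indicator_of_mem ht]
  rw [integrableOn_norm_rpow_iff_memLp_indicator (one_pos.trans_le hp) measurableSet_Ici hx_eq
    (hξ.1.add hy_meas.aestronglyMeasurable), hx_causal.indicator_eq]
  exact ⟨fun hx => by simpa only [add_sub_cancel_left] using hx.sub hξ, hξ.add⟩

end Restriction

end Volterra

open Volterra in
theorem solution_Lp_iff_interval_average_Lp_general {E : Type*} [NormedAddCommGroup E]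
    [NormedSpace ℝ E] [CompleteSpace E] {p : ℝ} (hp : 1 ≤ p) {ν : SignedMeasure ℝ} {f : ℝ → E}
    (hf : LocallyIntegrableOn f (Ici 0)) {r r' : ℝ → ℝ} (hr'loc : LocallyIntegrableOn r' (Ici 0))
    (hFTC : ∀ t ≥ (0 : ℝ), r t = 1 + ∫ s in (0 : ℝ)..t, r' s)
    (hres : ∀ᵐ t ∂(volume.restrict (Ioi (0 : ℝ))),
      r' t = signedSetIntegral ν (fun s => r (t - s)) (Icc 0 t))
    (hrL1 : IntegrableOn r (Ici 0)) :
    (∀ θ ∈ Ioc (0 : ℝ) 1, IntegrableOn (fun t => ‖∫ s in t..t + θ, f s‖ ^ p) (Ici 0)) ↔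
      ∀ ξ : E, IntegrableOn
        (fun t => ‖r t • ξ + ∫ s in (0 : ℝ)..t, r (t - s) • f s‖ ^ p) (Ici 0) := by
  have hr := isIntegrableResolvent_indicator_Ici hr'loc hFTC hres hrL1
  calc (∀ θ ∈ Ioc (0 : ℝ) 1, IntegrableOn (fun t => ‖∫ s in t..t + θ, f s‖ ^ p) (Ici 0))
      ↔ ∀ θ ∈ Ioc (0 : ℝ) 1,
          MemLp (fun t => ∫ s in t..t + θ, (Ici 0).indicator f s) (ENNReal.ofReal p) :=
        forall₂_congr fun _ hθ =>
          integrableOn_norm_intervalIntegral_rpow_iff hf (one_pos.trans_le hp) hθ.1.le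
    _ ↔ MemLp ((Ici 0).indicator r ⋆ (Ici 0).indicator f) (ENNReal.ofReal p) :=
        hr.memLp_intervalIntegral_add_iff (ENNReal.one_le_ofReal.2 hp) ENNReal.ofReal_ne_top
          (Causal.indicator_Ici f) (locallyIntegrable_indicator isClosed_Ici hf)
    _ ↔ _ :=
        ((forall_congr' (integrableOn_norm_solution_rpow_iff hr hf hp)).trans (forall_const E)).symm

/-- Theorem 2.3: let `r` be the differential resolvent of the finite signed
Borel measure `ν` on `[0,∞)`, with `r ∈ L¹([0,∞))`, and for `ξ ∈ ℝ` let `x(·;ξ)` be the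
solution of the perturbed equation, given by the variation of constants formula
`x(t;ξ) = r(t) ξ + ∫_0^t r(t-s) f(s) ds`. Then:
(A) every interval average `t ↦ ∫_t^{t+θ} f(s) ds`, `θ ∈ (0,1]`, is in `L^p([0,∞))`
if and only if
(B) `x(·;ξ) ∈ L^p([0,∞))` for every `ξ ∈ ℝ`. -/
theorem solution_Lp_iff_interval_average_Lp
    (p : ℝ) (hp : 1 ≤ p)
    (ν : MeasureTheory.SignedMeasure ℝ)
    (hν : ν.restrict (Iio 0) = 0)
    (f : ℝ → ℝ)
    (hf : LocallyIntegrableOn f (Ici 0))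
    (r r' : ℝ → ℝ)
    (hr'loc : LocallyIntegrableOn r' (Ici 0))
    (hr0 : r 0 = 1)
    (hFTC : ∀ t ≥ (0:ℝ), r t = 1 + ∫ s in (0:ℝ)..t, r' s)
    (hres : ∀ᵐ t ∂(volume.restrict (Ioi (0:ℝ))),
      r' t = signedSetIntegral ν (fun s => r (t - s)) (Icc 0 t))
    (hrL1 : IntegrableOn r (Ici 0)) :
    (∀ θ ∈ Ioc (0:ℝ) 1,
        IntegrableOn (fun t => |∫ s in t..(t + θ), f s| ^ p) (Ici 0))
      ↔ ∀ ξ : ℝ,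
          IntegrableOn (fun t => |r t * ξ + ∫ s in (0:ℝ)..t, r (t - s) * f s| ^ p)
            (Ici 0) := by
  simpa only [Real.norm_eq_abs, smul_eq_mul] using
    solution_Lp_iff_interval_average_Lp_general hp hf hr'loc hFTC hres hrL1
end
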